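/- arXiv:2206.06742 — 2 statements merged into one kernel-verified Lean document; each statement's English description precedes it below -/
import Mathlib

section
/- Assume 0 ≤ α < N, p, q > 0, ρ > 0, that the Dirichlet eigenpair hypothesis holds for (Ω, λ₁, φ), and μ ≤ C_{H,Ω}. If s > 1, p + q ≥ 2, and either p·|γ_*| ≤ N − α or (p + q)·|γ_*| < (|γ_*| + 2)/s + N − α + 2 (the latter equivalent to p + q < (1/s)(1 + 2/|γ_*|) + (N−α+2)/|γ_*| when γ_* < 0), then the system (S): −Δu − μ|x|^{−2}u ≥ (|x|^{−α} * v^p) v^q, −Δv − μ|x|^{−2}v ≥ u^s has no positive solution in C_Ω^ρ. -/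
open MeasureTheory Real Set
open scoped ENNReal NNReal

noncomputable section

/-- Euclidean space `ℝ^N`. -/
abbrev Euc (N : ℕ) := EuclideanSpace ℝ (Fin N)

/-- The Euclidean Laplacian `Δu(x) = ∑ ∂²u/∂xᵢ²(x)`, the trace of the Hessian. -/
def lap (N : ℕ) (u : Euc N → ℝ) (x : Euc N) : ℝ :=
  ∑ i : Fin N,
    iteratedFDeriv ℝ 2 u x ![EuclideanSpace.single i 1, EuclideanSpace.single i 1]

/-- The open cone `C_Ω^ρ = {x : |x| > ρ, x/|x| ∈ Ω}`. -/
def coneGT (N : ℕ) (ρ : ℝ) (Ω : Set (Euc N)) : Set (Euc N) :=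
  {x | ρ < ‖x‖ ∧ ‖x‖⁻¹ • x ∈ Ω}

/-- The full open cone `C_Ω = {x ≠ 0 : x/|x| ∈ Ω}`. -/
def cone (N : ℕ) (Ω : Set (Euc N)) : Set (Euc N) :=
  {x | x ≠ 0 ∧ ‖x‖⁻¹ • x ∈ Ω}

/-- `Ω` is a nonempty, connected, relatively open subset of the unit sphere `S^{N-1}`. -/
def IsConeDomain (N : ℕ) (Ω : Set (Euc N)) : Prop :=
  Ω ⊆ Metric.sphere (0 : Euc N) 1 ∧ IsConnected Ω ∧
    IsOpen {ω : Metric.sphere (0 : Euc N) 1 | (ω : Euc N) ∈ Ω}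

/-- The convolution `(|x|^{-α} * f)(x) = ∫_{C_Ω^ρ} f(y)|x-y|^{-α} dy`, valued in `[0,∞]`. -/
def rieszConv (N : ℕ) (α ρ : ℝ) (Ω : Set (Euc N)) (f : Euc N → ℝ) (x : Euc N) : ℝ≥0∞ :=
  ∫⁻ y in coneGT N ρ Ω, ENNReal.ofReal (f y * ‖x - y‖ ^ (-α))

/-- Dirichlet eigenpair hypothesis for `(Ω, λ₁, φ)`: `φ` is continuous on the closure of `Ω`,
positive on `Ω`, vanishing on the relative boundary, with maximum `1`, and its 0-homogeneous
extension `Φ(x) = φ(x/|x|)` is `C²` on the open cone and satisfies `ΔΦ = -λ₁|x|⁻²Φ`. -/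
structure DirichletEigenpair (N : ℕ) (Ω : Set (Euc N)) (lam1 : ℝ) (φ : Euc N → ℝ) : Prop where
  contOn : ContinuousOn φ (closure Ω)
  pos : ∀ ω ∈ Ω, 0 < φ ω
  bdryZero : ∀ ω ∈ closure Ω \ Ω, φ ω = 0
  le_one : ∀ ω ∈ closure Ω, φ ω ≤ 1
  max_one : ∃ ω ∈ closure Ω, φ ω = 1
  smoothExt : ContDiffOn ℝ 2 (fun x => φ (‖x‖⁻¹ • x)) (cone N Ω)
  eigen : ∀ x ∈ cone N Ω,
    lap N (fun y => φ (‖y‖⁻¹ • y)) x = -lam1 * ‖x‖ ^ (-(2:ℝ)) * φ (‖x‖⁻¹ • x)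

/-- The Hardy constant `C_{H,Ω} = λ₁ + ((N-2)/2)²`. -/
def CHconst (N : ℕ) (lam1 : ℝ) : ℝ := lam1 + (((N : ℝ) - 2) / 2) ^ 2

/-- The smaller root `γ_*` of `γ(γ + N - 2) = λ₁ - μ`. -/
def gammaStar (N : ℕ) (lam1 μ : ℝ) : ℝ :=
  (-((N : ℝ) - 2) - Real.sqrt (((N : ℝ) - 2) ^ 2 + 4 * (lam1 - μ))) / 2

/-- A positive (classical) solution of `(E) : -Δu - μ|x|⁻²u ≥ (|x|^{-α} * uᵖ) u^q` in `C_Ω^ρ`. -/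
def IsPosSolE (N : ℕ) (ρ μ α p q : ℝ) (Ω : Set (Euc N)) (u : Euc N → ℝ) : Prop :=
  ContDiffOn ℝ 2 u (coneGT N ρ Ω) ∧
  ContinuousOn u (closure (coneGT N ρ Ω)) ∧
  (∀ x ∈ coneGT N ρ Ω, 0 < u x) ∧
  (∀ x ∈ coneGT N ρ Ω, rieszConv N α ρ Ω (fun y => u y ^ p) x < ⊤) ∧
  (∀ x ∈ coneGT N ρ Ω,
    (rieszConv N α ρ Ω (fun y => u y ^ p) x).toReal * u x ^ q ≤
      -lap N u x - μ * ‖x‖ ^ (-(2:ℝ)) * u x)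

/-- A positive solution of `(Z) : -Δu - μ|x|⁻²u ≥ (∫_{C_Ω^ρ} uᵖ) u^q` in `C_Ω^ρ`. -/
def IsPosSolZ (N : ℕ) (ρ μ p q : ℝ) (Ω : Set (Euc N)) (u : Euc N → ℝ) : Prop :=
  ContDiffOn ℝ 2 u (coneGT N ρ Ω) ∧
  ContinuousOn u (closure (coneGT N ρ Ω)) ∧
  (∀ x ∈ coneGT N ρ Ω, 0 < u x) ∧
  (∫⁻ y in coneGT N ρ Ω, ENNReal.ofReal (u y ^ p)) < ⊤ ∧
  (∀ x ∈ coneGT N ρ Ω,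
    (∫⁻ y in coneGT N ρ Ω, ENNReal.ofReal (u y ^ p)).toReal * u x ^ q ≤
      -lap N u x - μ * ‖x‖ ^ (-(2:ℝ)) * u x)

/-- A positive solution `(u, v)` of the system `(S)` in `C_Ω^ρ`. -/
def IsPosSolS (N : ℕ) (ρ μ α p q s : ℝ) (Ω : Set (Euc N)) (u v : Euc N → ℝ) : Prop :=
  ContDiffOn ℝ 2 u (coneGT N ρ Ω) ∧ ContinuousOn u (closure (coneGT N ρ Ω)) ∧
  ContDiffOn ℝ 2 v (coneGT N ρ Ω) ∧ ContinuousOn v (closure (coneGT N ρ Ω)) ∧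
  (∀ x ∈ coneGT N ρ Ω, 0 < u x) ∧ (∀ x ∈ coneGT N ρ Ω, 0 < v x) ∧
  (∀ x ∈ coneGT N ρ Ω, rieszConv N α ρ Ω (fun y => v y ^ p) x < ⊤) ∧
  (∀ x ∈ coneGT N ρ Ω,
    (rieszConv N α ρ Ω (fun y => v y ^ p) x).toReal * v x ^ q ≤
      -lap N u x - μ * ‖x‖ ^ (-(2:ℝ)) * u x) ∧
  (∀ x ∈ coneGT N ρ Ω, u x ^ s ≤ -lap N v x - μ * ‖x‖ ^ (-(2:ℝ)) * v x)


section helpers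
open Filter Topology



/-- Partial derivative in the `i`-th coordinate. -/
def pd {N : ℕ} (i : Fin N) (u : Euc N → ℝ) (x : Euc N) : ℝ :=
  fderiv ℝ u x (EuclideanSpace.single i 1)

lemma pd_contDiffAt {N : ℕ} {i : Fin N} {u : Euc N → ℝ} {x : Euc N}
    (h : ContDiffAt ℝ 2 u x) : ContDiffAt ℝ 1 (pd i u) x := by
  have h1 : ContDiffAt ℝ 1 (fderiv ℝ u) x := h.fderiv_right (by norm_num)
  exact h1.clm_apply contDiffAt_const

lemma pd_contAt {N : ℕ} {i : Fin N} {u : Euc N → ℝ} {x : Euc N}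
    (h : ContDiffAt ℝ 1 u x) : ContinuousAt (pd i u) x := by
  have h1 : ContDiffAt ℝ 0 (fderiv ℝ u) x := h.fderiv_right (by norm_num)
  have h2 : ContDiffAt ℝ 0 (pd i u) x := h1.clm_apply contDiffAt_const
  exact h2.continuousAt

lemma lap_eq {N : ℕ} {u : Euc N → ℝ} {x : Euc N}
    (h : ContDiffAt ℝ 2 u x) : lap N u x = ∑ i, pd i (pd i u) x := by
  have h1 : DifferentiableAt ℝ (fderiv ℝ u) x :=
    (h.fderiv_right (m := 1) (by norm_num)).differentiableAt (by norm_num)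
  unfold lap
  refine Finset.sum_congr rfl fun i _ => ?_
  rw [iteratedFDeriv_two_apply]
  have h3 : pd i (pd i u) x = fderiv ℝ (fun y => fderiv ℝ u y (EuclideanSpace.single i 1)) x
    (EuclideanSpace.single i 1) := rfl
  rw [h3, fderiv_clm_apply h1 (differentiableAt_const _)]
  simp

lemma pd_congr {N : ℕ} {i : Fin N} {u v : Euc N → ℝ} {x : Euc N}
    (h : u =ᶠ[𝓝 x] v) : pd i u x = pd i v x := by
  unfold pd; rw [h.fderiv_eq]

lemma pd_congr' {N : ℕ} {i : Fin N} {u v : Euc N → ℝ} {x : Euc N}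
    (h : u =ᶠ[𝓝 x] v) : pd i u =ᶠ[𝓝 x] pd i v := by
  filter_upwards [h.eventuallyEq_nhds] with y hy
  exact pd_congr hy

lemma lap_congr {N : ℕ} {u v : Euc N → ℝ} {x : Euc N}
    (h : u =ᶠ[𝓝 x] v) : lap N u x = lap N v x := by
  unfold lap
  rw [h.iteratedFDeriv ℝ 2 |>.eq_of_nhds]

lemma pd_mul {N : ℕ} {i : Fin N} {u v : Euc N → ℝ} {x : Euc N}
    (hu : DifferentiableAt ℝ u x) (hv : DifferentiableAt ℝ v x) :
    pd i (fun y => u y * v y) x = u x * pd i v x + v x * pd i u x := by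
  unfold pd; rw [fderiv_fun_mul hu hv]; simp

lemma pd_add {N : ℕ} {i : Fin N} {u v : Euc N → ℝ} {x : Euc N}
    (hu : DifferentiableAt ℝ u x) (hv : DifferentiableAt ℝ v x) :
    pd i (fun y => u y + v y) x = pd i u x + pd i v x := by
  unfold pd; rw [fderiv_fun_add hu hv]; simp

lemma pd_comp {N : ℕ} {i : Fin N} {F : ℝ → ℝ} {F' : ℝ} {g : Euc N → ℝ} {x : Euc N}
    (hF : HasDerivAt F F' (g x)) (hg : DifferentiableAt ℝ g x) :
    pd i (fun y => F (g y)) x = F' * pd i g x := by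
  unfold pd
  have := hF.comp_hasFDerivAt x hg.hasFDerivAt
  have h2 : fderiv ℝ (fun y => F (g y)) x = F' • fderiv ℝ g x := this.fderiv
  rw [h2]; simp

lemma cd_ev {N : ℕ} {u : Euc N → ℝ} {x : Euc N} (h : ContDiffAt ℝ 2 u x) :
    ∀ᶠ y in 𝓝 x, ContDiffAt ℝ 2 u y := h.eventually (by decide)

lemma cd_diff {N : ℕ} {u : Euc N → ℝ} {x : Euc N} (h : ContDiffAt ℝ 2 u x) :
    DifferentiableAt ℝ u x := h.differentiableAt (by norm_num)

lemma cd_diff1 {N : ℕ} {i : Fin N} {u : Euc N → ℝ} {x : Euc N} (h : ContDiffAt ℝ 2 u x) :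
    DifferentiableAt ℝ (pd i u) x := (pd_contDiffAt h).differentiableAt (by norm_num)

lemma lap_mul {N : ℕ} {u v : Euc N → ℝ} {x : Euc N}
    (hu : ContDiffAt ℝ 2 u x) (hv : ContDiffAt ℝ 2 v x) :
    lap N (fun y => u y * v y) x
      = u x * lap N v x + v x * lap N u x + 2 * ∑ i, pd i u x * pd i v x := by
  rw [lap_eq (hu.mul hv), lap_eq hu, lap_eq hv, Finset.mul_sum, Finset.mul_sum, Finset.mul_sum,
    ← Finset.sum_add_distrib, ← Finset.sum_add_distrib]
  refine Finset.sum_congr rfl fun i _ => ?_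
  have h1 : pd i (fun y => u y * v y) =ᶠ[𝓝 x] fun y => u y * pd i v y + v y * pd i u y := by
    filter_upwards [cd_ev hu, cd_ev hv] with y h1 h2
    exact pd_mul (cd_diff h1) (cd_diff h2)
  rw [pd_congr h1, pd_add (u := fun y => u y * pd i v y) (v := fun y => v y * pd i u y)
    ((cd_diff hu).mul (cd_diff1 hv)) ((cd_diff hv).mul (cd_diff1 hu)),
    pd_mul (cd_diff hu) (cd_diff1 hv), pd_mul (cd_diff hv) (cd_diff1 hu)]
  ring

lemma lap_add {N : ℕ} {u v : Euc N → ℝ} {x : Euc N}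
    (hu : ContDiffAt ℝ 2 u x) (hv : ContDiffAt ℝ 2 v x) :
    lap N (fun y => u y + v y) x = lap N u x + lap N v x := by
  rw [lap_eq (hu.add hv), lap_eq hu, lap_eq hv, ← Finset.sum_add_distrib]
  refine Finset.sum_congr rfl fun i _ => ?_
  have h1 : pd i (fun y => u y + v y) =ᶠ[𝓝 x] fun y => pd i u y + pd i v y := by
    filter_upwards [cd_ev hu, cd_ev hv] with y h1 h2
    exact pd_add (cd_diff h1) (cd_diff h2)
  rw [pd_congr h1, pd_add (cd_diff1 hu) (cd_diff1 hv)]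

lemma lap_comp {N : ℕ} {F F1 : ℝ → ℝ} {F2 : ℝ} {g : Euc N → ℝ} {x : Euc N}
    (hF : ContDiffAt ℝ 2 F (g x)) (hF1 : ∀ᶠ t in 𝓝 (g x), HasDerivAt F (F1 t) t)
    (hF2 : HasDerivAt F1 F2 (g x)) (hg : ContDiffAt ℝ 2 g x) :
    lap N (fun y => F (g y)) x
      = F1 (g x) * lap N g x + F2 * ∑ i, pd i g x ^ 2 := by
  have hc : ContDiffAt ℝ 2 (fun y => F (g y)) x := hF.comp x hg
  rw [lap_eq hc, lap_eq hg, Finset.mul_sum, Finset.mul_sum, ← Finset.sum_add_distrib]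
  refine Finset.sum_congr rfl fun i _ => ?_
  have h1 : pd i (fun y => F (g y)) =ᶠ[𝓝 x] fun y => F1 (g y) * pd i g y := by
    filter_upwards [cd_ev hg, hg.continuousAt.eventually hF1] with y h1 h2
    exact pd_comp h2 (cd_diff h1)
  have h2 : DifferentiableAt ℝ (fun y => F1 (g y)) x :=
    hF2.differentiableAt.comp x (cd_diff hg)
  rw [pd_congr h1, pd_mul h2 (cd_diff1 hg), pd_comp hF2 (cd_diff hg)]
  ring

/-- Green formula. -/
lemma green {N : ℕ} {ψ w : Euc N → ℝ} (hψ : ContDiff ℝ 2 ψ) (hc : HasCompactSupport ψ)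
    (hw : ∀ x ∈ tsupport ψ, ContDiffAt ℝ 2 w x) :
    Integrable (fun x => ψ x * lap N w x) ∧ Integrable (fun x => w x * lap N ψ x) ∧
    ∫ x, ψ x * lap N w x = ∫ x, w x * lap N ψ x := by
  have s1 : ∀ i : Fin N, tsupport (pd i ψ) ⊆ tsupport ψ := fun i =>
    (tsupport_fderiv_apply_subset ℝ (f := ψ) (EuclideanSpace.single i (1:ℝ)))
  have s2 : ∀ i : Fin N, tsupport (pd i (pd i ψ)) ⊆ tsupport ψ := fun i =>
    (tsupport_fderiv_apply_subset ℝ (f := pd i ψ) (EuclideanSpace.single i (1:ℝ))).trans (s1 i)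
  have key : ∀ (a b : Euc N → ℝ), tsupport a ⊆ tsupport ψ → Continuous a →
      (∀ x ∈ tsupport ψ, ContinuousAt b x) → Integrable (fun x => a x * b x) := by
    intro a b ha hac hb
    have hsup : tsupport (fun x => a x * b x) ⊆ tsupport a := tsupport_mul_subset_left
    refine Continuous.integrable_of_hasCompactSupport ?_ ?_
    · refine continuous_of_tsupport fun x hx => ?_
      exact hac.continuousAt.mul (hb x (ha (hsup hx)))
    · exact hc.of_isClosed_subset (isClosed_tsupport _) (hsup.trans ha)
  have cψ : ∀ i : Fin N, ContDiff ℝ 1 (pd i ψ) := fun i =>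
    contDiff_iff_contDiffAt.2 fun x => pd_contDiffAt hψ.contDiffAt
  have cψ2 : ∀ i : Fin N, Continuous (pd i (pd i ψ)) := fun i =>
    continuous_iff_continuousAt.2 fun x => pd_contAt (cψ i).contDiffAt
  have e1 : (fun x => ψ x * lap N w x) = fun x => ∑ i, ψ x * pd i (pd i w) x := by
    funext x
    by_cases hx : x ∈ tsupport ψ
    · rw [lap_eq (hw x hx), Finset.mul_sum]
    · simp [image_eq_zero_of_notMem_tsupport hx]
  have e2 : (fun x => w x * lap N ψ x) = fun x => ∑ i, pd i (pd i ψ) x * w x := by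
    funext x
    rw [lap_eq hψ.contDiffAt, Finset.mul_sum]
    exact Finset.sum_congr rfl fun i _ => mul_comm _ _
  have i1 : ∀ i, Integrable (fun x => ψ x * pd i (pd i w) x) := fun i =>
    key _ _ subset_rfl hψ.continuous fun x hx => pd_contAt (pd_contDiffAt (hw x hx))
  have i2 : ∀ i, Integrable (fun x => pd i (pd i ψ) x * w x) := fun i =>
    key _ _ (s2 i) (cψ2 i) fun x hx => (hw x hx).continuousAt
  have i3 : ∀ i, Integrable (fun x => pd i ψ x * pd i w x) := fun i =>
    key _ _ (s1 i) (cψ i).continuous fun x hx => (pd_contDiffAt (hw x hx)).continuousAt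
  have i4 : ∀ i, Integrable (fun x => ψ x * pd i w x) := fun i =>
    key _ _ subset_rfl hψ.continuous fun x hx => (pd_contDiffAt (hw x hx)).continuousAt
  have i5 : ∀ i, Integrable (fun x => pd i ψ x * w x) := fun i =>
    key _ _ (s1 i) (cψ i).continuous fun x hx => (hw x hx).continuousAt
  rw [e1, e2]
  refine ⟨integrable_finset_sum _ fun i _ => i1 i, integrable_finset_sum _ fun i _ => i2 i, ?_⟩
  rw [integral_finset_sum _ fun i _ => i1 i, integral_finset_sum _ fun i _ => i2 i]
  refine Finset.sum_congr rfl fun i _ => ?_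
  have g1 := integral_mul_fderiv_eq_neg_fderiv_mul_of_integrable (μ := volume)
    (f := ψ) (g := pd i w) (v := EuclideanSpace.single i (1:ℝ)) (i3 i) (i1 i) (i4 i)
    (fun x _ => hψ.contDiffAt.differentiableAt (by norm_num))
    (fun x hx => cd_diff1 (hw x hx))
  have g2 := integral_mul_fderiv_eq_neg_fderiv_mul_of_integrable (μ := volume)
    (f := pd i ψ) (g := w) (v := EuclideanSpace.single i (1:ℝ)) (i2 i) (i3 i) (i5 i)
    (fun x _ => (cψ i).contDiffAt.differentiableAt (by norm_num))
    (fun x hx => cd_diff (hw x (s1 i hx)))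
  change ∫ x, ψ x * pd i (pd i w) x = - ∫ x, pd i ψ x * pd i w x at g1
  change ∫ x, pd i ψ x * pd i w x = - ∫ x, pd i (pd i ψ) x * w x at g2
  rw [g1, g2, neg_neg]

/-- logarithm of the norm -/
def ln {N : ℕ} (x : Euc N) : ℝ := Real.log ‖x‖

lemma ln_eq {N : ℕ} (x : Euc N) : ln x = (1/2) * Real.log (∑ i, x i ^ 2) := by
  unfold ln
  rw [EuclideanSpace.norm_eq, Real.log_sqrt (Finset.sum_nonneg fun i _ => by positivity)]
  simp; ring

lemma ln_cd {N : ℕ} {x : Euc N} (hx : x ≠ 0) : ContDiffAt ℝ 2 (ln (N := N)) x := by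
  unfold ln
  exact (contDiffAt_norm ℝ hx).log (norm_ne_zero_iff.2 hx)

lemma pd_coord {N : ℕ} (i j : Fin N) (x : Euc N) :
    pd i (fun y : Euc N => y j) x = if j = i then 1 else 0 := by
  unfold pd
  have : fderiv ℝ (fun y : Euc N => y j) x = EuclideanSpace.proj j :=
    (EuclideanSpace.proj (𝕜 := ℝ) j : Euc N →L[ℝ] ℝ).hasFDerivAt.fderiv
  rw [this]; simp [Pi.single_apply]

lemma pd_ln {N : ℕ} {i : Fin N} {x : Euc N} (hx : x ≠ 0) :
    pd i ln x = x i * (∑ j, x j ^ 2)⁻¹ := by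
  have hs : (∑ j, x j ^ 2) = ‖x‖ ^ 2 := by
    rw [EuclideanSpace.norm_eq, Real.sq_sqrt (Finset.sum_nonneg fun i _ => by positivity)]; simp
  have hne : (∑ j, x j ^ 2) ≠ 0 := by rw [hs]; exact pow_ne_zero _ (norm_ne_zero_iff.2 hx)
  have h1 : (ln : Euc N → ℝ) = fun y => (1/2) * Real.log (∑ j, y j ^ 2) := funext ln_eq
  have hf : HasFDerivAt (fun y : Euc N => ∑ j, y j ^ 2)
      (∑ j, (2 * x j) • (EuclideanSpace.proj (𝕜 := ℝ) j : Euc N →L[ℝ] ℝ)) x := by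
    refine HasFDerivAt.fun_sum fun j _ => ?_
    have := ((EuclideanSpace.proj (𝕜 := ℝ) j : Euc N →L[ℝ] ℝ).hasFDerivAt (x := x)).pow 2
    simpa using this
  have h2 := (hf.log hne).const_mul (1/2)
  rw [h1]
  unfold pd
  rw [h2.fderiv]
  simp [Pi.single_apply]
  field_simp

lemma nsq {N : ℕ} (x : Euc N) : ∑ j, x j ^ 2 = ‖x‖ ^ 2 := by
  rw [EuclideanSpace.norm_eq, Real.sq_sqrt (Finset.sum_nonneg fun i _ => by positivity)]; simp

lemma sum_pd_ln {N : ℕ} {x : Euc N} (hx : x ≠ 0) :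
    ∑ i, pd i ln x ^ 2 = (‖x‖ ^ 2)⁻¹ := by
  have hne : ‖x‖ ≠ 0 := norm_ne_zero_iff.2 hx
  simp_rw [pd_ln hx, nsq, mul_pow, ← Finset.sum_mul, nsq]
  field_simp

lemma lap_ln {N : ℕ} {x : Euc N} (hx : x ≠ 0) :
    lap N ln x = (N - 2) * (‖x‖ ^ 2)⁻¹ := by
  have hne : ‖x‖ ≠ 0 := norm_ne_zero_iff.2 hx
  have hne2 : (∑ j, x j ^ 2) ≠ 0 := by rw [nsq]; positivity
  rw [lap_eq (ln_cd hx)]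
  have hf : HasFDerivAt (fun y : Euc N => ∑ j, y j ^ 2)
      (∑ j, (2 * x j) • (EuclideanSpace.proj (𝕜 := ℝ) j : Euc N →L[ℝ] ℝ)) x := by
    refine HasFDerivAt.fun_sum fun j _ => ?_
    have := ((EuclideanSpace.proj (𝕜 := ℝ) j : Euc N →L[ℝ] ℝ).hasFDerivAt (x := x)).pow 2
    simpa using this
  have h1 : ∀ i : Fin N, pd i (pd i ln) x = (‖x‖^2)⁻¹ - 2 * x i ^ 2 * (‖x‖^2)⁻¹ ^ 2 := by
    intro i
    have e : pd i ln =ᶠ[𝓝 x] fun y => y i * (∑ j, y j ^ 2)⁻¹ := by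
      filter_upwards [isOpen_ne.mem_nhds hx] with y hy using pd_ln hy
    have d1 : DifferentiableAt ℝ (fun y : Euc N => y i) x :=
      (EuclideanSpace.proj (𝕜 := ℝ) i : Euc N →L[ℝ] ℝ).differentiableAt
    have d2 : DifferentiableAt ℝ (fun y : Euc N => (∑ j, y j ^ 2)⁻¹) x :=
      hf.differentiableAt.inv hne2
    rw [pd_congr e, pd_mul d1 d2, pd_coord,
      pd_comp (F := fun t => t⁻¹) (g := fun y : Euc N => ∑ j, y j ^ 2)
        (hasDerivAt_inv hne2) hf.differentiableAt]
    have : pd i (fun y : Euc N => ∑ j, y j ^ 2) x = 2 * x i := by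
      unfold pd; rw [hf.fderiv]; simp [Pi.single_apply]
    rw [this, nsq]
    simp
    ring
  simp_rw [h1]
  rw [Finset.sum_sub_distrib, ← Finset.sum_mul, ← Finset.mul_sum, nsq]
  simp
  field_simp



lemma contDiff_two_of {f f1 f2 : ℝ → ℝ} (h1 : ∀ t, HasDerivAt f (f1 t) t)
    (h2 : ∀ t, HasDerivAt f1 (f2 t) t) (h3 : Continuous f2) : ContDiff ℝ 2 f := by
  have e1 : deriv f = f1 := funext fun t => (h1 t).deriv
  have e2 : deriv f1 = f2 := funext fun t => (h2 t).deriv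
  have c1 : ContDiff ℝ 1 f1 := by
    rw [contDiff_one_iff_deriv]
    exact ⟨fun t => (h2 t).differentiableAt, e2 ▸ h3⟩
  have : ContDiff ℝ (1 + 1) f := by
    rw [contDiff_succ_iff_deriv]
    exact ⟨fun t => (h1 t).differentiableAt, by simp, e1 ▸ c1⟩
  simpa [one_add_one_eq_two] using this

lemma hasDerivAt_maxsq (x : ℝ) : HasDerivAt (fun x : ℝ => (max x 0) ^ 2) (2 * max x 0) x := by
  rcases lt_trichotomy x 0 with h | h | h
  · have : (fun x : ℝ => (max x 0) ^ 2) =ᶠ[𝓝 x] fun _ => 0 := by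
      filter_upwards [gt_mem_nhds h] with y hy
      simp [max_eq_right hy.le]
    rw [max_eq_right h.le, mul_zero]
    exact (hasDerivAt_const x (0:ℝ)).congr_of_eventuallyEq this
  · subst h
    rw [hasDerivAt_iff_isLittleO_nhds_zero]
    simp only [max_self, zero_add, mul_zero, smul_zero, sub_zero, ne_eq, OfNat.ofNat_ne_zero,
      not_false_eq_true, zero_pow]
    have h1 : (fun h : ℝ => (max h 0) ^ 2) =O[𝓝 0] fun h : ℝ => h ^ 2 := by
      refine Asymptotics.IsBigO.of_bound 1 (Eventually.of_forall fun y => ?_)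
      rw [one_mul, norm_pow, norm_pow]
      gcongr
      rw [Real.norm_eq_abs, Real.norm_eq_abs, abs_of_nonneg (le_max_right _ _)]
      exact max_le (le_abs_self y) (abs_nonneg y)
    refine h1.trans_isLittleO ?_
    simpa using (Asymptotics.isLittleO_pow_id (𝕜 := ℝ) (n := 2) (by norm_num))
  · have : (fun x : ℝ => (max x 0) ^ 2) =ᶠ[𝓝 x] fun x => x ^ 2 := by
      filter_upwards [lt_mem_nhds h] with y hy
      simp [max_eq_left (le_of_lt hy)]
    rw [max_eq_left h.le]
    exact (by simpa using hasDerivAt_pow 2 x : HasDerivAt (fun x : ℝ => x ^ 2) (2 * x) x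
      ).congr_of_eventuallyEq this

/-- a `C¹` step function -/
def kk (x : ℝ) : ℝ := (max x 0) ^ 2 / (1 + (max x 0) ^ 2)
/-- its derivative -/
def kk1 (x : ℝ) : ℝ := 2 * max x 0 / (1 + (max x 0) ^ 2) ^ 2

lemma kk_deriv (x : ℝ) : HasDerivAt kk (kk1 x) x := by
  have h := hasDerivAt_maxsq x
  have hp : (1 + (max x 0) ^ 2) ≠ 0 := by positivity
  have := h.div (h.const_add 1) hp
  unfold kk kk1
  refine this.congr_deriv ?_
  field_simp
  ring

lemma kk1_cont : Continuous kk1 := by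
  unfold kk1
  refine Continuous.div (by fun_prop) (by fun_prop) fun x => by positivity

lemma kk_cont : Continuous kk :=
  continuous_iff_continuousAt.2 fun x => (kk_deriv x).continuousAt

lemma kk1_nonneg (x : ℝ) : 0 ≤ kk1 x := by unfold kk1; positivity
lemma kk1_pos {x : ℝ} (h : 0 < x) : 0 < kk1 x := by
  unfold kk1; rw [max_eq_left h.le]; positivity
lemma kk_nonneg (x : ℝ) : 0 ≤ kk x := by unfold kk; positivity
lemma kk_le_one (x : ℝ) : kk x ≤ 1 := by
  unfold kk; rw [div_le_one (by positivity)]; linarith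
lemma kk_zero {x : ℝ} (h : x ≤ 0) : kk x = 0 := by unfold kk; simp [max_eq_right h]
lemma kk1_zero {x : ℝ} (h : x ≤ 0) : kk1 x = 0 := by unfold kk1; simp [max_eq_right h]
lemma kk_mono : Monotone kk :=
  monotone_of_deriv_nonneg (fun x => (kk_deriv x).differentiableAt)
    fun x => by rw [(kk_deriv x).deriv]; exact kk1_nonneg x
lemma kk_half {x : ℝ} (h : 1 ≤ x) : 1 / 2 ≤ kk x := by
  refine le_trans ?_ (kk_mono h)
  unfold kk; norm_num

/-- weighted primitive of the step -/
def EE (d x : ℝ) : ℝ := ∫ τ in (0:ℝ)..x, Real.exp (d * τ) * kk τ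

lemma EE_deriv (d x : ℝ) : HasDerivAt (EE d) (Real.exp (d * x) * kk x) x := by
  have hc : Continuous fun τ => Real.exp (d * τ) * kk τ := by
    have := kk_cont
    fun_prop
  exact intervalIntegral.integral_hasDerivAt_right (hc.intervalIntegrable _ _)
    (hc.stronglyMeasurableAtFilter _ _) hc.continuousAt

lemma EE_deriv2 (d x : ℝ) : HasDerivAt (fun x => Real.exp (d * x) * kk x)
    (Real.exp (d * x) * (d * kk x + kk1 x)) x := by
  have h1 : HasDerivAt (fun x => Real.exp (d * x)) (Real.exp (d * x) * d) x := by
    have := ((hasDerivAt_id x).const_mul d).exp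
    simpa using this
  refine (h1.mul (kk_deriv x)).congr_deriv ?_
  ring

lemma EE_mono (d : ℝ) : Monotone (EE d) :=
  monotone_of_deriv_nonneg (fun x => (EE_deriv d x).differentiableAt)
    fun x => by rw [(EE_deriv d x).deriv]; exact mul_nonneg (Real.exp_pos _).le (kk_nonneg x)

lemma EE_zero {d x : ℝ} (h : x ≤ 0) : EE d x = 0 := by
  unfold EE
  rw [intervalIntegral.integral_symm, neg_eq_zero]
  rw [intervalIntegral.integral_congr (g := fun _ => (0:ℝ))]
  · simp
  · intro y hy
    rw [uIcc_of_le h] at hy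
    simp [kk_zero hy.2]

lemma EE_nonneg (d x : ℝ) : 0 ≤ EE d x := by
  rcases le_total x 0 with h | h
  · rw [EE_zero h]
  · have := EE_mono d h
    rwa [EE_zero le_rfl] at this

lemma EE_lip {d : ℝ} (hd : 0 ≤ d) {x y : ℝ} (h : x ≤ y) :
    EE d y - EE d x ≤ Real.exp (d * y) * (y - x) := by
  have := (convex_Iic y).norm_image_sub_le_of_norm_hasDerivWithin_le
    (f := EE d) (f' := fun x => Real.exp (d * x) * kk x) (C := Real.exp (d * y)) (x := x) (y := y)
    (fun z _ => (EE_deriv d z).hasDerivWithinAt) (fun z hz => by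
      rw [Real.norm_eq_abs, abs_of_nonneg (mul_nonneg (Real.exp_pos _).le (kk_nonneg z))]
      calc Real.exp (d * z) * kk z ≤ Real.exp (d * y) * 1 := by
            gcongr
            · exact kk_nonneg z
            · exact hz
            · exact kk_le_one z
        _ = _ := mul_one _) h (le_refl y)
  rw [Real.norm_eq_abs, Real.norm_eq_abs, abs_of_nonneg (by linarith : 0 ≤ y - x)] at this
  exact (le_abs_self _).trans this

lemma EE_le {d : ℝ} (hd : 0 ≤ d) {x : ℝ} (h : 0 ≤ x) : EE d x ≤ Real.exp (d * x) * x := by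
  have := EE_lip hd h
  rw [EE_zero le_rfl] at this
  simpa using this

/-- lower bound -/
lemma EE_ge {d : ℝ} (hd : 0 ≤ d) {x : ℝ} (h : 2 ≤ x) :
    Real.exp (d * (x - 1)) * (1/2) ≤ EE d x := by
  have hm : (Real.exp (d * (x - 1)) * (1/2)) * (x - (x - 1)) ≤ EE d x - EE d (x - 1) := by
    refine (convex_Icc (x-1) x).mul_sub_le_image_sub_of_le_deriv
      (f := EE d) (C := Real.exp (d * (x - 1)) * (1/2))
      (fun z _ => (EE_deriv d z).continuousAt.continuousWithinAt)
      (fun z _ => (EE_deriv d z).differentiableAt.differentiableWithinAt)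
      (fun z hz => ?_) (x - 1) (by simp) x (by simp) (by linarith)
    rw [interior_Icc] at hz
    rw [(EE_deriv d z).deriv]
    have h2 := kk_half (x := z) (by linarith [hz.1])
    have h1 : Real.exp (d * (x-1)) ≤ Real.exp (d * z) := by
      gcongr; exact hz.1.le
    gcongr
  have := EE_nonneg d (x-1)
  linarith

/-- truncation -/
def GG (ε t : ℝ) : ℝ := ε * EE 0 ((t - ε) / ε)
def GG1 (ε t : ℝ) : ℝ := kk ((t - ε) / ε)
def GG2 (ε t : ℝ) : ℝ := kk1 ((t - ε) / ε) / ε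

lemma GG_deriv {ε : ℝ} (hε : 0 < ε) (t : ℝ) : HasDerivAt (GG ε) (GG1 ε t) t := by
  have h1 : HasDerivAt (fun t => (t - ε) / ε) (1 / ε) t :=
    ((hasDerivAt_id t).sub_const ε).div_const ε
  have := ((EE_deriv 0 ((t - ε)/ε)).comp t h1).const_mul ε
  refine this.congr_deriv ?_
  unfold GG1
  simp; field_simp

lemma GG_deriv2 {ε : ℝ} (t : ℝ) : HasDerivAt (GG1 ε) (GG2 ε t) t := by
  have h1 : HasDerivAt (fun t => (t - ε) / ε) (1 / ε) t :=
    ((hasDerivAt_id t).sub_const ε).div_const ε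
  have := ((kk_deriv ((t - ε)/ε)).comp t h1)
  refine this.congr_deriv ?_
  unfold GG2; ring

lemma GG2_cont {ε : ℝ} : Continuous (GG2 ε) := by
  unfold GG2
  have := kk1_cont
  fun_prop

lemma GG_zero {ε : ℝ} (hε : 0 < ε) {t : ℝ} (h : t ≤ ε) : GG ε t = 0 := by
  unfold GG; rw [EE_zero, mul_zero]
  exact div_nonpos_of_nonpos_of_nonneg (by linarith) hε.le

lemma GG_nonneg {ε : ℝ} (hε : 0 < ε) (t : ℝ) : 0 ≤ GG ε t :=
  mul_nonneg hε.le (EE_nonneg _ _)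

lemma GG_le {ε : ℝ} (hε : 0 < ε) {t : ℝ} (ht : 0 ≤ t) : GG ε t ≤ t := by
  rcases le_total t ε with h | h
  · rw [GG_zero hε h]; exact ht
  · have := EE_le le_rfl (div_nonneg (sub_nonneg.2 h) hε.le)
    simp at this
    unfold GG
    calc ε * EE 0 ((t - ε) / ε) ≤ ε * ((t - ε) / ε) := by gcongr
      _ = t - ε := by field_simp
      _ ≤ t := by linarith

lemma EE0 {x : ℝ} (h : 0 ≤ x) : EE 0 x = x - arctan x := by
  unfold EE
  have : ∫ τ in (0:ℝ)..x, Real.exp (0 * τ) * kk τ = ∫ τ in (0:ℝ)..x, (1 - (1 + τ^2)⁻¹) := by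
    refine intervalIntegral.integral_congr fun y hy => ?_
    rw [uIcc_of_le h] at hy
    simp [kk, max_eq_left hy.1]
    field_simp
    ring
  rw [this, intervalIntegral.integral_sub]
  · simp
  · simp
  · refine Continuous.intervalIntegrable ?_ _ _
    exact Continuous.inv₀ (by fun_prop) fun x => by positivity

lemma GG_tendsto {t : ℝ} (ht : 0 < t) :
    Tendsto (fun n : ℕ => GG (1 / ((n:ℝ) + 1)) t) atTop (𝓝 t) := by
  have h0 : Tendsto (fun n : ℕ => 1 / ((n:ℝ) + 1)) atTop (𝓝 0) :=
    tendsto_one_div_add_atTop_nhds_zero_nat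
  have h1 : ∀ᶠ n : ℕ in atTop, 1 / ((n:ℝ) + 1) ≤ t := by
    filter_upwards [h0.eventually (gt_mem_nhds ht)] with n hn using hn.le
  have lo : Tendsto (fun n : ℕ => t - 3 * (1 / ((n:ℝ) + 1))) atTop (𝓝 t) := by
    simpa using (h0.const_mul 3).const_sub t
  refine tendsto_of_tendsto_of_tendsto_of_le_of_le' lo tendsto_const_nhds ?_ ?_
  · filter_upwards [h1] with n hn
    set ε := 1 / ((n:ℝ) + 1) with he
    have hε : 0 < ε := by positivity
    unfold GG
    rw [EE0 (div_nonneg (sub_nonneg.2 hn) hε.le)]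
    have h3 : arctan ((t - ε)/ε) ≤ 2 := by
      have := arctan_lt_pi_div_two ((t - ε)/ε)
      have := Real.pi_lt_d2
      linarith
    have h4 : ε * ((t - ε) / ε) = t - ε := by field_simp
    nlinarith
  · exact Eventually.of_forall fun n => GG_le (by positivity) ht.le

lemma GG1_tendsto {t : ℝ} (ht : 0 < t) :
    Tendsto (fun n : ℕ => GG1 (1 / ((n:ℝ) + 1)) t) atTop (𝓝 1) := by
  have h2 : Tendsto (fun n : ℕ => (t - 1 / ((n:ℝ) + 1)) / (1 / ((n:ℝ) + 1))) atTop atTop := by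
    have : (fun n : ℕ => (t - 1 / ((n:ℝ) + 1)) / (1 / ((n:ℝ) + 1))) =
        fun n : ℕ => t * ((n:ℝ) + 1) + (-1) := by
      funext n; field_simp; ring
    rw [this]
    exact tendsto_atTop_add_const_right _ _
      ((tendsto_atTop_add_const_right _ _ tendsto_natCast_atTop_atTop).const_mul_atTop ht)
  have h3 : Tendsto kk atTop (𝓝 1) := by
    have e : (fun x : ℝ => 1 - (1 + x^2)⁻¹) =ᶠ[atTop] kk := by
      filter_upwards [eventually_ge_atTop 0] with x hx
      simp [kk, max_eq_left hx]; field_simp; ring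
    refine Tendsto.congr' e ?_
    have : Tendsto (fun x : ℝ => (1 + x^2)⁻¹) atTop (𝓝 0) :=
      tendsto_inv_atTop_zero.comp
        (tendsto_atTop_add_const_left _ _ (tendsto_pow_atTop (by norm_num)))
    simpa using this.const_sub 1
  exact h3.comp h2



lemma hasDerivAt_maxcube (x : ℝ) :
    HasDerivAt (fun x : ℝ => (max x 0) ^ 3) (3 * (max x 0) ^ 2) x := by
  have h := (hasDerivAt_maxsq x).mul (hasDerivAt_id x)
  have hm : ∀ x : ℝ, max x 0 * x = max x 0 ^ 2 := by
    intro x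
    rcases le_total x 0 with h | h
    · simp [max_eq_right h]
    · rw [max_eq_left h]; ring
  have e : (fun x : ℝ => (max x 0) ^ 3) = (fun x : ℝ => (max x 0) ^ 2) * id := by
    funext y
    simp only [Pi.mul_apply, id]
    rw [pow_succ (max y 0) 2, sq, mul_assoc, mul_assoc, hm, ← sq]
  rw [e]
  refine h.congr_deriv ?_
  have := hm x
  simp only [id]
  linear_combination 2 * this

lemma exists_theta : ∃ (θ θ1 θ2 : ℝ → ℝ) (B : ℝ), 0 ≤ B ∧
    (∀ x, HasDerivAt θ (θ1 x) x) ∧ (∀ x, HasDerivAt θ1 (θ2 x) x) ∧ Continuous θ2 ∧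
    (∀ x, 0 ≤ θ x) ∧ (∀ x, θ x ≤ 1) ∧
    (∀ x ≤ 0, θ x = 0 ∧ θ1 x = 0 ∧ θ2 x = 0) ∧ (∀ x, 1 ≤ x → θ x = 1 ∧ θ1 x = 0 ∧ θ2 x = 0) ∧
    (∀ x, |θ1 x| ≤ B) ∧ (∀ x, |θ2 x| ≤ B) := by
  set θ : ℝ → ℝ := fun x => smoothTransition (2 * x - 1/2) with hθ
  have hs : ContDiff ℝ 2 θ := by
    have : ContDiff ℝ 2 smoothTransition := smoothTransition.contDiff (n := 2)
    exact this.comp (by fun_prop)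
  have hs' : ContDiff ℝ (1+1) θ := by simpa [one_add_one_eq_two] using hs
  have h1 : ContDiff ℝ 1 (deriv θ) := (contDiff_succ_iff_deriv.1 hs').2.2
  have h2 : Continuous (deriv (deriv θ)) := (contDiff_one_iff_deriv.1 h1).2
  have z0 : ∀ x ≤ 0, θ =ᶠ[𝓝 x] fun _ => 0 := by
    intro x hx
    filter_upwards [gt_mem_nhds (show x < 1/4 by linarith)] with y hy
    exact smoothTransition.zero_of_nonpos (by linarith)
  have z1 : ∀ x, 1 ≤ x → θ =ᶠ[𝓝 x] fun _ => 1 := by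
    intro x hx
    filter_upwards [lt_mem_nhds (show 3/4 < x by linarith)] with y hy
    exact smoothTransition.one_of_one_le (by linarith)
  have w0 : ∀ x ≤ 0, θ x = 0 ∧ deriv θ x = 0 ∧ deriv (deriv θ) x = 0 := by
    intro x hx
    refine ⟨(z0 x hx).eq_of_nhds, by rw [(z0 x hx).deriv_eq]; simp, ?_⟩
    rw [(z0 x hx).deriv.deriv_eq]; simp
  have w1 : ∀ x, 1 ≤ x → θ x = 1 ∧ deriv θ x = 0 ∧ deriv (deriv θ) x = 0 := by
    intro x hx
    refine ⟨(z1 x hx).eq_of_nhds, by rw [(z1 x hx).deriv_eq]; simp, ?_⟩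
    rw [(z1 x hx).deriv.deriv_eq]; simp
  obtain ⟨B1, hB1⟩ := (isCompact_Icc (a := (0:ℝ)) (b := 1)).exists_bound_of_continuousOn
    h1.continuous.continuousOn
  obtain ⟨B2, hB2⟩ := (isCompact_Icc (a := (0:ℝ)) (b := 1)).exists_bound_of_continuousOn
    h2.continuousOn
  refine ⟨θ, deriv θ, deriv (deriv θ), max 0 (max B1 B2), le_max_left _ _, ?_, ?_, h2,
    fun x => smoothTransition.nonneg _, fun x => smoothTransition.le_one _, w0, w1, ?_, ?_⟩
  · exact fun x => (hs.differentiable (by norm_num) x).hasDerivAt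
  · exact fun x => (h1.differentiable (by norm_num) x).hasDerivAt
  · intro x
    rcases le_total x 0 with h | h
    · rw [(w0 x h).2.1]; simp
    rcases le_total x 1 with h' | h'
    · exact (hB1 x ⟨h, h'⟩).trans ((le_max_left _ _).trans (le_max_right _ _))
    · rw [(w1 x h').2.1]; simp
  · intro x
    rcases le_total x 0 with h | h
    · rw [(w0 x h).2.2]; simp
    rcases le_total x 1 with h' | h'
    · exact (hB2 x ⟨h, h'⟩).trans ((le_max_right _ _).trans (le_max_right _ _))
    · rw [(w1 x h').2.2]; simp

/-- the decaying tail -/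
def tl (κ τ s : ℝ) : ℝ := κ * (max (2 - s / τ) 0) ^ 3
def tl1 (κ τ s : ℝ) : ℝ := - (3 * κ / τ * (max (2 - s / τ) 0) ^ 2)
def tl2 (κ τ s : ℝ) : ℝ := 6 * κ / τ ^ 2 * (max (2 - s / τ) 0)

lemma tl_deriv (κ τ s : ℝ) : HasDerivAt (tl κ τ) (tl1 κ τ s) s := by
  have h1 : HasDerivAt (fun s => 2 - s / τ) (-(1 / τ)) s :=
    ((hasDerivAt_id s).div_const τ).const_sub 2
  refine (((hasDerivAt_maxcube (2 - s/τ)).comp s h1).const_mul κ).congr_deriv ?_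
  unfold tl1; ring

lemma tl_deriv2 (κ τ s : ℝ) : HasDerivAt (tl1 κ τ) (tl2 κ τ s) s := by
  have h1 : HasDerivAt (fun s => 2 - s / τ) (-(1 / τ)) s :=
    ((hasDerivAt_id s).div_const τ).const_sub 2
  refine (((hasDerivAt_maxsq (2 - s/τ)).comp s h1).const_mul (3 * κ / τ)).neg.congr_deriv ?_
  unfold tl2; ring

set_option maxHeartbeats 1000000 in
lemma exists_zeta {d : ℝ} (hd : 0 ≤ d) : ∃ C c : ℝ, 0 < C ∧ 0 < c ∧ ∀ τ : ℝ, 2 ≤ τ →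
    ∃ ζ ζ1 ζ2 : ℝ → ℝ, (∀ x, HasDerivAt ζ (ζ1 x) x) ∧ (∀ x, HasDerivAt ζ1 (ζ2 x) x) ∧
      Continuous ζ2 ∧ (∀ x, 0 ≤ ζ x) ∧ (∀ x ≤ 0, ζ x = 0) ∧ (∀ x, 2 * τ ≤ x → ζ x = 0) ∧
      (∀ x, x ∉ Ico τ (τ + 1) → 0 ≤ ζ2 x - d * ζ1 x) ∧
      (∀ x ∈ Ico τ (τ + 1), -(C * exp (d * τ)) ≤ ζ2 x - d * ζ1 x) ∧
      (∀ x ∈ Ico τ (τ + 1), c * exp (d * τ) ≤ ζ x) ∧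
      (∀ x ≤ τ, ζ2 x - d * ζ1 x = exp (d * x) * kk1 x) := by
  obtain ⟨θ, θ1, θ2, B, hB, hθ, hθ1, cθ2, θnn, θle, θ0, θ1', bθ1, bθ2⟩ := exists_theta
  set e := exp d with he
  have he1 : 0 < e := exp_pos d
  refine ⟨1 + 2 * B * (e + 3) + (B + d * B) * (e + 3), exp (-d) * (1/2) / 8,
    by positivity, by positivity, fun τ hτ => ?_⟩
  have hτ0 : 0 < τ := by linarith
  set κ := EE d τ with hκ
  have hκ0 : 0 ≤ κ := EE_nonneg _ _
  have hκ1 : κ ≤ exp (d * τ) * τ := EE_le hd hτ0.le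
  have hκ2 : exp (d * τ) * (exp (-d) * (1/2)) ≤ κ := by
    have := EE_ge hd hτ
    rwa [show d * (τ - 1) = d * τ + -d by ring, exp_add, mul_assoc] at this
  set g := EE d
  set g1 := fun x => exp (d * x) * kk x with hg1
  set g2 := fun x => exp (d * x) * (d * kk x + kk1 x) with hg2
  have gd : ∀ x, HasDerivAt g (g1 x) x := EE_deriv d
  have gd1 : ∀ x, HasDerivAt g1 (g2 x) x := EE_deriv2 d
  have gc : Continuous g2 := by
    have := kk_cont; have := kk1_cont; fun_prop
  set h := tl κ τ
  set h1 := tl1 κ τ with hh1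
  set h2 := tl2 κ τ with hh2
  have hD : ∀ x, HasDerivAt h (h1 x) x := tl_deriv κ τ
  have hD1 : ∀ x, HasDerivAt h1 (h2 x) x := tl_deriv2 κ τ
  have hc : Continuous h2 := by
    simp only [hh2]; unfold tl2; fun_prop
  have θd : ∀ x, HasDerivAt (fun x => θ (x - τ)) (θ1 (x - τ)) x := fun x =>
    (hθ (x - τ)).comp_sub_const x τ
  have θd1 : ∀ x, HasDerivAt (fun x => θ1 (x - τ)) (θ2 (x - τ)) x := fun x =>
    (hθ1 (x - τ)).comp_sub_const x τ
  set ζ : ℝ → ℝ := fun x => g x + θ (x - τ) * (h x - g x) with hζ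
  set ζ1 : ℝ → ℝ := fun x => g1 x + (θ1 (x - τ) * (h x - g x) + θ (x - τ) * (h1 x - g1 x)) with hζ1
  set ζ2 : ℝ → ℝ := fun x => g2 x + ((θ2 (x - τ) * (h x - g x) + θ1 (x - τ) * (h1 x - g1 x))
    + (θ1 (x - τ) * (h1 x - g1 x) + θ (x - τ) * (h2 x - g2 x))) with hζ2
  have hgD : ∀ x, g2 x - d * g1 x = exp (d * x) * kk1 x := fun x => by
    simp only [hg2, hg1]; ring
  have hgD0 : ∀ x, 0 ≤ g2 x - d * g1 x := fun x => by
    rw [hgD]; exact mul_nonneg (exp_pos _).le (kk1_nonneg x)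
  have h2nn : ∀ x, 0 ≤ h2 x := fun x => by simp only [hh2]; unfold tl2; positivity
  have h1np : ∀ x, h1 x ≤ 0 := fun x => by
    simp only [hh1]; unfold tl1
    rw [neg_nonpos]; positivity
  have hhD0 : ∀ x, 0 ≤ h2 x - d * h1 x := fun x => by
    nlinarith [h2nn x, h1np x]
  have hhnn : ∀ x, 0 ≤ h x := fun x => by
    change 0 ≤ tl κ τ x
    unfold tl; positivity
  have hgnn : ∀ x, 0 ≤ g x := fun x => EE_nonneg d x
  have ident : ∀ x, ζ2 x - d * ζ1 x = (1 - θ (x - τ)) * (g2 x - d * g1 x)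
      + θ (x - τ) * (h2 x - d * h1 x) + 2 * (θ1 (x - τ) * (h1 x - g1 x))
      + (θ2 (x - τ) - d * θ1 (x - τ)) * (h x - g x) := fun x => by
    simp only [hζ2, hζ1]; ring
  have win : ∀ x ∈ Ico τ (τ + 1), max (2 - x / τ) 0 ≤ 1 ∧ 1/2 ≤ max (2 - x / τ) 0 := by
    intro x hx
    have a1 : 1 ≤ x / τ := (one_le_div hτ0).2 hx.1
    have a2 : x / τ ≤ 3/2 := by
      rw [div_le_iff₀ hτ0]; linarith [hx.2]
    exact ⟨max_le (by linarith) (by norm_num), le_max_of_le_left (by linarith)⟩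
  refine ⟨ζ, ζ1, ζ2, ?_, ?_, ?_, ?_, ?_, ?_, ?_, ?_, ?_, ?_⟩
  · intro x
    exact (gd x).add ((θd x).mul ((hD x).sub (gd x)))
  · intro x
    exact (gd1 x).add (((θd1 x).mul ((hD x).sub (gd x))).add ((θd x).mul ((hD1 x).sub (gd1 x))))
  · have c1 : Continuous g := continuous_iff_continuousAt.2 fun x => (gd x).continuousAt
    have c2 : Continuous g1 := continuous_iff_continuousAt.2 fun x => (gd1 x).continuousAt
    have c3 : Continuous h := continuous_iff_continuousAt.2 fun x => (hD x).continuousAt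
    have c4 : Continuous h1 := continuous_iff_continuousAt.2 fun x => (hD1 x).continuousAt
    have c5 : Continuous θ := continuous_iff_continuousAt.2 fun x => (hθ x).continuousAt
    have c6 : Continuous θ1 := continuous_iff_continuousAt.2 fun x => (hθ1 x).continuousAt
    simp only [hζ2]
    fun_prop
  · intro x
    have : ζ x = (1 - θ (x - τ)) * g x + θ (x - τ) * h x := by simp only [hζ]; ring
    rw [this]
    exact add_nonneg (mul_nonneg (by linarith [θle (x - τ)]) (hgnn x))
      (mul_nonneg (θnn _) (hhnn x))
  · intro x hx
    simp only [hζ]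
    rw [(θ0 (x - τ) (by linarith)).1, show g x = 0 from EE_zero hx]; simp
  · intro x hx
    simp only [hζ]
    rw [(θ1' (x - τ) (by linarith)).1]
    have : h x = 0 := by
      change tl κ τ x = 0
      unfold tl
      rw [max_eq_right]; · simp
      have : 2 ≤ x / τ := (le_div_iff₀ hτ0).2 hx
      linarith
    rw [this]; ring
  · intro x hx
    rw [ident]
    rcases lt_or_ge x τ with h' | h'
    · obtain ⟨a, b, c⟩ := θ0 (x - τ) (by linarith)
      rw [a, b, c]; simp [hgD0 x]
    · have : τ + 1 ≤ x := by
        by_contra hcon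
        exact hx ⟨h', by linarith⟩
      obtain ⟨a, b, c⟩ := θ1' (x - τ) (by linarith)
      rw [a, b, c]; simp
      linarith [hhD0 x]
  · intro x hx
    rw [ident]
    obtain ⟨w1, w2⟩ := win x hx
    have t0 := θnn (x - τ)
    have t1 := θle (x - τ)
    have ee : exp (d * x) ≤ e * exp (d * τ) := by
      rw [he, ← exp_add]
      apply exp_le_exp.2
      nlinarith [hx.2]
    have ep : 0 < exp (d * τ) := exp_pos _
    have b1 : 0 ≤ g1 x ∧ g1 x ≤ e * exp (d * τ) := by
      simp only [hg1]
      refine ⟨mul_nonneg (exp_pos _).le (kk_nonneg x), ?_⟩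
      have := kk_le_one x
      have := exp_pos (d * x)
      nlinarith [kk_nonneg x]
    have hkt : κ / τ ≤ exp (d * τ) := by rw [div_le_iff₀ hτ0]; exact hκ1
    have hkt0 : 0 ≤ κ / τ := by positivity
    have w3 : (max (2 - x / τ) 0) ^ 2 ≤ 1 := by
      have : 0 ≤ max (2 - x/τ) 0 := by linarith
      nlinarith
    have b2 : - (3 * exp (d * τ)) ≤ h1 x := by
      simp only [hh1]; unfold tl1
      rw [mul_div_assoc]
      have w30 : 0 ≤ (max (2 - x / τ) 0) ^ 2 := by positivity
      nlinarith
    have b3 : |h1 x - g1 x| ≤ (e + 3) * exp (d * τ) := by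
      rw [abs_le]; constructor <;> nlinarith [h1np x, b1.1, b1.2]
    have b4 : |h x - g x| ≤ (e + 3) * exp (d * τ) := by
      have l1 : g x - κ ≤ e * exp (d * τ) := by
        have := EE_lip hd hx.1
        have hx1 : x - τ ≤ 1 := by linarith [hx.2]
        have hx0 : 0 ≤ x - τ := by linarith [hx.1]
        have p0 := exp_pos (d * x)
        have : g x - κ ≤ exp (d * x) * (x - τ) := this
        nlinarith
      have l2 : κ ≤ g x := EE_mono d hx.1
      have l3 : h x ≤ κ := by
        change tl κ τ x ≤ κ
        unfold tl
        have : (max (2 - x / τ) 0) ^ 3 ≤ 1 := pow_le_one₀ (by linarith) w1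
        nlinarith
      have l4 : κ - 3 * exp (d * τ) ≤ h x := by
        change _ ≤ tl κ τ x
        unfold tl
        have m1 : 1 - 1/τ ≤ max (2 - x / τ) 0 := by
          refine le_max_of_le_left ?_
          have : x / τ ≤ 1 + 1/τ := by
            rw [div_le_iff₀ hτ0]; field_simp; linarith [hx.2]
          linarith
        set m := max (2 - x / τ) 0
        have m2 : 1 - 3 * (1 - m) ≤ m ^ 3 := by nlinarith [sq_nonneg (m - 1), sq_nonneg m]
        have m3 : 1 - 3 * (1/τ) ≤ m ^ 3 := by linarith
        have : κ * (1 - 3 * (1/τ)) ≤ κ * m ^ 3 := by gcongr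
        have e3 : κ * (1 - 3 * (1/τ)) = κ - 3 * (κ / τ) := by ring
        linarith
      rw [abs_le]; constructor <;> nlinarith
    have c1 : |2 * (θ1 (x - τ) * (h1 x - g1 x))| ≤ 2 * (B * ((e + 3) * exp (d * τ))) := by
      rw [abs_mul, abs_mul, abs_two]
      have := bθ1 (x - τ)
      gcongr
    have c2 : |(θ2 (x - τ) - d * θ1 (x - τ)) * (h x - g x)|
        ≤ (B + d * B) * ((e + 3) * exp (d * τ)) := by
      rw [abs_mul]
      have q1 := bθ1 (x - τ)
      have q2 := bθ2 (x - τ)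
      have : |θ2 (x - τ) - d * θ1 (x - τ)| ≤ B + d * B := by
        refine (abs_sub _ _).trans ?_
        rw [abs_mul, abs_of_nonneg hd]
        gcongr
      gcongr
    have c3 := (abs_le.1 c1).1
    have c4 := (abs_le.1 c2).1
    have c5 : 0 ≤ (1 - θ (x - τ)) * (g2 x - d * g1 x) := mul_nonneg (by linarith) (hgD0 x)
    have c6 : 0 ≤ θ (x - τ) * (h2 x - d * h1 x) := mul_nonneg t0 (hhD0 x)
    have c7 : (1 + 2 * B * (e + 3) + (B + d * B) * (e + 3)) * exp (d * τ)
        = exp (d * τ) + 2 * (B * ((e + 3) * exp (d * τ)))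
          + (B + d * B) * ((e + 3) * exp (d * τ)) := by ring
    rw [c7]
    linarith
  · intro x hx
    obtain ⟨w1, w2⟩ := win x hx
    have t0 := θnn (x - τ)
    have t1 := θle (x - τ)
    have l2 : κ ≤ g x := EE_mono d hx.1
    have l3 : κ / 8 ≤ h x := by
      change _ ≤ tl κ τ x
      unfold tl
      have : (1/2:ℝ) ^ 3 ≤ (max (2 - x / τ) 0) ^ 3 := by gcongr
      have : (1/8:ℝ) ≤ (max (2 - x / τ) 0) ^ 3 := by norm_num at this ⊢; linarith
      nlinarith
    have : ζ x = (1 - θ (x - τ)) * g x + θ (x - τ) * h x := by simp only [hζ]; ring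
    rw [this]
    have : κ / 8 ≤ (1 - θ (x - τ)) * g x + θ (x - τ) * h x := by
      have : (1 - θ (x - τ)) * (κ/8) ≤ (1 - θ (x - τ)) * g x := by
        apply mul_le_mul_of_nonneg_left _ (by linarith); linarith
      nlinarith
    linarith
  · intro x hx
    obtain ⟨a, b, c⟩ := θ0 (x - τ) (by linarith)
    rw [ident, a, b, c, hgD]; simp

/-- zero-homogeneous extension -/
def Ph {N : ℕ} (φ : Euc N → ℝ) (x : Euc N) : ℝ := φ (‖x‖⁻¹ • x)

lemma rp2 {r : ℝ} (hr : 0 ≤ r) : r ^ (-(2:ℝ)) = (r ^ 2)⁻¹ := by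
  rw [Real.rpow_neg hr]; norm_num

lemma cone_open {N : ℕ} {Ω : Set (Euc N)} (hΩ : IsConeDomain N Ω) : IsOpen (cone N Ω) := by
  obtain ⟨hs, -, ho⟩ := hΩ
  obtain ⟨O, hO, hO'⟩ := isOpen_induced_iff.1 ho
  have key : cone N Ω = {x : Euc N | x ≠ 0} ∩ (fun x => ‖x‖⁻¹ • x) ⁻¹' O := by
    ext x
    simp only [cone, mem_ofPred_eq, mem_inter_iff, mem_preimage]
    refine and_congr_right fun hx => ?_
    have hm : ‖x‖⁻¹ • x ∈ Metric.sphere (0 : Euc N) 1 := by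
      simp [norm_smul, norm_ne_zero_iff.2 hx]
    have : (⟨‖x‖⁻¹ • x, hm⟩ : Metric.sphere (0 : Euc N) 1) ∈ Subtype.val ⁻¹' O ↔
      (⟨‖x‖⁻¹ • x, hm⟩ : Metric.sphere (0 : Euc N) 1) ∈
        {ω : Metric.sphere (0 : Euc N) 1 | (ω : Euc N) ∈ Ω} := by rw [hO']
    simpa using this.symm
  rw [key]
  refine ContinuousOn.isOpen_inter_preimage ?_ isOpen_ne hO
  refine ContinuousOn.smul (ContinuousOn.inv₀ continuous_norm.continuousOn ?_) continuousOn_id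
  intro x hx; exact norm_ne_zero_iff.2 hx

lemma coneGT_sub {N : ℕ} {Ω : Set (Euc N)} {ρ : ℝ} (hρ : 0 < ρ) : coneGT N ρ Ω ⊆ cone N Ω := by
  intro x hx
  exact ⟨norm_pos_iff.1 (hρ.trans hx.1), hx.2⟩

lemma coneGT_open {N : ℕ} {Ω : Set (Euc N)} {ρ : ℝ} (hρ : 0 < ρ) (hΩ : IsConeDomain N Ω) :
    IsOpen (coneGT N ρ Ω) := by
  have : coneGT N ρ Ω = cone N Ω ∩ {x | ρ < ‖x‖} := by
    ext x
    constructor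
    · intro h; exact ⟨coneGT_sub hρ h, h.1⟩
    · intro h; exact ⟨h.2, h.1.2⟩
  rw [this]
  exact (cone_open hΩ).inter (isOpen_lt continuous_const continuous_norm)

lemma Ph_pos {N : ℕ} {Ω : Set (Euc N)} {l : ℝ} {φ : Euc N → ℝ}
    (h : DirichletEigenpair N Ω l φ) {x : Euc N} (hx : x ∈ cone N Ω) : 0 < Ph φ x :=
  h.pos _ hx.2

lemma Ph_le {N : ℕ} {Ω : Set (Euc N)} {l : ℝ} {φ : Euc N → ℝ}
    (h : DirichletEigenpair N Ω l φ) {x : Euc N} (hx : x ∈ cone N Ω) : Ph φ x ≤ 1 :=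
  h.le_one _ (subset_closure hx.2)

lemma Ph_cd {N : ℕ} {Ω : Set (Euc N)} {l : ℝ} {φ : Euc N → ℝ} (hΩ : IsConeDomain N Ω)
    (h : DirichletEigenpair N Ω l φ) {x : Euc N} (hx : x ∈ cone N Ω) :
    ContDiffAt ℝ 2 (Ph φ) x :=
  h.smoothExt.contDiffAt ((cone_open hΩ).mem_nhds hx)

lemma Ph_lap {N : ℕ} {Ω : Set (Euc N)} {l : ℝ} {φ : Euc N → ℝ}
    (h : DirichletEigenpair N Ω l φ) {x : Euc N} (hx : x ∈ cone N Ω) :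
    lap N (Ph φ) x = -l * (‖x‖^2)⁻¹ * Ph φ x := by
  have := h.eigen x hx
  rw [rp2 (norm_nonneg x)] at this
  exact this

lemma euler {N : ℕ} {Ω : Set (Euc N)} {l : ℝ} {φ : Euc N → ℝ} (hΩ : IsConeDomain N Ω)
    (h : DirichletEigenpair N Ω l φ) {x : Euc N} (hx : x ∈ cone N Ω) :
    ∑ i, x i * pd i (Ph φ) x = 0 := by
  have hd := (cd_diff (Ph_cd hΩ h hx)).hasFDerivAt
  have e1 : ∑ i, x i * pd i (Ph φ) x = fderiv ℝ (Ph φ) x x := by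
    have hxs : x = ∑ i, x i • EuclideanSpace.single i (1:ℝ) := by
      ext j
      simp [Finset.sum_apply, Pi.single_apply]
    conv_rhs => rw [hxs]
    rw [map_sum]
    refine Finset.sum_congr rfl fun i _ => ?_
    rw [map_smul, ← hxs]; rfl
  rw [e1]
  have hl : HasDerivAt (fun t : ℝ => x + t • x) x 0 := by
    simpa using ((hasDerivAt_id (0:ℝ)).smul_const x).const_add x
  have hd' : HasFDerivAt (Ph φ) (fderiv ℝ (Ph φ) x) (x + (0:ℝ) • x) := by simpa using hd
  have h1 := hd'.comp_hasDerivAt (0:ℝ) hl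
  have h2 : HasDerivAt (fun _ : ℝ => Ph φ x) (fderiv ℝ (Ph φ) x x) 0 := by
    refine h1.congr_of_eventuallyEq ?_
    have : ∀ᶠ t : ℝ in 𝓝 0, -1 < t := lt_mem_nhds (by norm_num)
    filter_upwards [this] with t ht
    have ht' : 0 < 1 + t := by linarith
    have e : x + t • x = (1 + t) • x := by rw [add_smul, one_smul]
    simp only [Function.comp, Ph, e]
    rw [norm_smul, Real.norm_of_nonneg ht'.le, smul_smul, mul_inv, mul_assoc, mul_comm (‖x‖⁻¹),
      ← mul_assoc, inv_mul_cancel₀ ht'.ne', one_mul]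
  exact h2.unique (hasDerivAt_const _ _)

/-- Laplacian of the test function. -/
lemma lap_test {N : ℕ} {Ω : Set (Euc N)} {l : ℝ} {φ : Euc N → ℝ} (hΩ : IsConeDomain N Ω)
    (h : DirichletEigenpair N Ω l φ) {f f1 f2 g g1 g2 : ℝ → ℝ}
    (hf : ∀ t, HasDerivAt f (f1 t) t) (hf1 : ∀ t, HasDerivAt f1 (f2 t) t) (hf2 : Continuous f2)
    (hg : ∀ t, HasDerivAt g (g1 t) t) (hg1 : ∀ t, HasDerivAt g1 (g2 t) t) (hg2 : Continuous g2)
    {x : Euc N} (hx : x ∈ cone N Ω) :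
    ContDiffAt ℝ 2 (fun y => f (ln y) * g (Ph φ y)) x ∧
    lap N (fun y => f (ln y) * g (Ph φ y)) x =
      (‖x‖^2)⁻¹ * (f2 (ln x) + (N - 2) * f1 (ln x)) * g (Ph φ x)
      + f (ln x) * (g1 (Ph φ x) * (-l * (‖x‖^2)⁻¹ * Ph φ x)
        + g2 (Ph φ x) * ∑ i, pd i (Ph φ) x ^ 2) := by
  have cf : ContDiff ℝ 2 f := contDiff_two_of hf hf1 hf2
  have cg : ContDiff ℝ 2 g := contDiff_two_of hg hg1 hg2
  have cl := ln_cd hx.1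
  have cp := Ph_cd hΩ h hx
  have c1 : ContDiffAt ℝ 2 (fun y => f (ln y)) x := cf.contDiffAt.comp x cl
  have c2 : ContDiffAt ℝ 2 (fun y => g (Ph φ y)) x := cg.contDiffAt.comp x cp
  refine ⟨c1.mul c2, ?_⟩
  rw [lap_mul c1 c2, lap_comp cf.contDiffAt (Eventually.of_forall hf) (hf1 _) cl,
    lap_comp cg.contDiffAt (Eventually.of_forall hg) (hg1 _) cp, Ph_lap h hx, lap_ln hx.1,
    sum_pd_ln hx.1]
  have : ∑ i, pd i (fun y => f (ln y)) x * pd i (fun y => g (Ph φ y)) x = 0 := by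
    have : ∀ i, pd i (fun y => f (ln y)) x * pd i (fun y => g (Ph φ y)) x
        = (f1 (ln x) * (∑ j, x j ^ 2)⁻¹ * g1 (Ph φ x)) * (x i * pd i (Ph φ) x) := by
      intro i
      rw [pd_comp (hf _) (cd_diff cl), pd_comp (hg _) (cd_diff cp), pd_ln hx.1]; ring
    simp_rw [this, ← Finset.mul_sum, euler hΩ h hx, mul_zero]
  rw [this]; ring

/-- admissible comparison functions -/
structure Adm (N : ℕ) (ρ : ℝ) (Ω : Set (Euc N)) (w : Euc N → ℝ) : Prop where
  cd : ContDiffOn ℝ 2 w (coneGT N ρ Ω)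
  pos : ∀ x ∈ coneGT N ρ Ω, 0 < w x
  bdd : ∀ b : ℝ, ∃ B : ℝ, 0 ≤ B ∧ ∀ x ∈ coneGT N ρ Ω, ‖x‖ ≤ b → w x ≤ B

lemma integ_of {N : ℕ} {ρ : ℝ} {Ω : Set (Euc N)} (hρ : 0 < ρ) (hΩ : IsConeDomain N Ω)
    {F : Euc N → ℝ} (hF : ContinuousOn F (coneGT N ρ Ω)) (R B : ℝ)
    (hR : ∀ x ∈ coneGT N ρ Ω, R < ‖x‖ → F x = 0)
    (hB : ∀ x ∈ coneGT N ρ Ω, ‖x‖ ≤ R → |F x| ≤ B) : IntegrableOn F (coneGT N ρ Ω) := by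
  have hm := (coneGT_open hρ hΩ).measurableSet
  have hmF : AEStronglyMeasurable F (volume.restrict (coneGT N ρ Ω)) := hF.aestronglyMeasurable hm
  have h1 : IntegrableOn F (coneGT N ρ Ω ∩ Metric.closedBall 0 R) := by
    have : IsFiniteMeasure (volume.restrict (coneGT N ρ Ω ∩ Metric.closedBall 0 R)) :=
      isFiniteMeasure_restrict.2 ((measure_mono inter_subset_right).trans_lt
        (isCompact_closedBall (0:Euc N) R).measure_lt_top).ne
    refine Integrable.of_bound (C := B) ?_ ?_
    · exact (hF.mono inter_subset_left).aestronglyMeasurable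
        (hm.inter Metric.isClosed_closedBall.measurableSet)
    · refine (ae_restrict_iff' (hm.inter Metric.isClosed_closedBall.measurableSet)).2
        (Eventually.of_forall fun x hx => ?_)
      exact hB x hx.1 (by simpa using hx.2)
  refine h1.of_forall_sdiff_eq_zero hm ?_
  intro x hx
  refine hR x hx.1 ?_
  by_contra hcon
  exact hx.2 ⟨hx.1, by simpa using hcon⟩

lemma testfun {N : ℕ} {Ω : Set (Euc N)} {l : ℝ} {φ : Euc N → ℝ} (hΩ : IsConeDomain N Ω)
    (h : DirichletEigenpair N Ω l φ) {ρ : ℝ} (hρ : 0 < ρ) {f f1 f2 : ℝ → ℝ}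
    (hf : ∀ t, HasDerivAt f (f1 t) t) (hf1 : ∀ t, HasDerivAt f1 (f2 t) t) (hf2 : Continuous f2)
    {a b : ℝ} (ha : log ρ < a) (hfa : ∀ t, t ≤ a → f t = 0) (hfb : ∀ t, b ≤ t → f t = 0)
    {ε : ℝ} (hε : 0 < ε) :
    ∃ ψ : Euc N → ℝ, ContDiff ℝ 2 ψ ∧ HasCompactSupport ψ ∧ tsupport ψ ⊆ coneGT N ρ Ω ∧
      ∀ x ∈ coneGT N ρ Ω, ψ x = f (ln x) * GG ε (Ph φ x) := by
  classical
  set D := coneGT N ρ Ω with hD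
  have hDo : IsOpen D := coneGT_open hρ hΩ
  set ψ : Euc N → ℝ := D.indicator (fun x => f (ln x) * GG ε (Ph φ x)) with hψ
  set K0 : Set (Euc N) := closure Ω ∩ φ ⁻¹' (Ici ε) with hK0
  have cΩ : IsCompact (closure Ω) := by
    refine (isCompact_sphere (0:Euc N) 1).of_isClosed_subset isClosed_closure ?_
    exact closure_minimal hΩ.1 Metric.isClosed_sphere
  have hsph : closure Ω ⊆ Metric.sphere (0:Euc N) 1 := closure_minimal hΩ.1 Metric.isClosed_sphere
  have cK0 : IsCompact K0 := cΩ.of_isClosed_subset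
    (h.contOn.preimage_isClosed_of_isClosed isClosed_closure isClosed_Ici) inter_subset_left
  set K : Set (Euc N) := (fun z : ℝ × Euc N => z.1 • z.2) '' (Icc (exp a) (exp b) ×ˢ K0) with hK
  have cK : IsCompact K := (isCompact_Icc.prod cK0).image (by fun_prop)
  have hKD : K ⊆ D := by
    rintro _ ⟨⟨r, ω⟩, ⟨hr, hω⟩, rfl⟩
    have hω1 : ‖ω‖ = 1 := by simpa using hsph hω.1
    have hr0 : 0 < r := (exp_pos a).trans_le hr.1
    have hn : ‖r • ω‖ = r := by rw [norm_smul, hω1, mul_one, Real.norm_of_nonneg hr0.le]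
    refine ⟨?_, ?_⟩
    · simp only [hn]
      calc ρ = exp (log ρ) := (exp_log hρ).symm
        _ < exp a := exp_lt_exp.2 ha
        _ ≤ r := hr.1
    · simp only [hn]
      rw [smul_smul, inv_mul_cancel₀ hr0.ne', one_smul]
      by_contra hcon
      have := h.bdryZero ω ⟨hω.1, hcon⟩
      have h2 : ε ≤ φ ω := hω.2
      linarith
  have hsupp : Function.support ψ ⊆ K := by
    intro x hx
    have hxD : x ∈ D := by
      by_contra hcon
      exact hx (indicator_of_notMem hcon _)
    have hx' : f (ln x) * GG ε (Ph φ x) ≠ 0 := by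
      have : ψ x ≠ 0 := hx
      rwa [hψ, indicator_of_mem hxD] at this
    have hx0 : 0 < ‖x‖ := hρ.trans hxD.1
    have f0 : f (ln x) ≠ 0 := left_ne_zero_of_mul hx'
    have g0 : GG ε (Ph φ x) ≠ 0 := right_ne_zero_of_mul hx'
    refine ⟨(‖x‖, ‖x‖⁻¹ • x), ⟨⟨?_, ?_⟩, subset_closure hxD.2, ?_⟩, ?_⟩
    · by_contra hcon
      refine f0 (hfa _ ?_)
      have : ‖x‖ ≤ exp a := (not_le.1 hcon).le
      exact (log_le_iff_le_exp hx0).2 this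
    · by_contra hcon
      refine f0 (hfb _ ?_)
      have : exp b ≤ ‖x‖ := (not_le.1 hcon).le
      exact (le_log_iff_exp_le hx0).2 this
    · by_contra hcon
      refine g0 (GG_zero hε ?_)
      exact (not_le.1 hcon).le
    · simp only [smul_smul, mul_inv_cancel₀ hx0.ne', one_smul]
  have hts : tsupport ψ ⊆ K := closure_minimal hsupp cK.isClosed
  refine ⟨ψ, ?_, cK.of_isClosed_subset (isClosed_tsupport _) hts, hts.trans hKD,
    fun x hx => indicator_of_mem hx _⟩
  rw [contDiff_iff_contDiffAt]
  intro x
  by_cases hx : x ∈ D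
  · have := (lap_test hΩ h hf hf1 hf2 (GG_deriv hε) GG_deriv2 GG2_cont (coneGT_sub hρ hx)).1
    refine this.congr_of_eventuallyEq ?_
    filter_upwards [hDo.mem_nhds hx] with y hy
    exact indicator_of_mem hy _
  · have hxK : x ∉ tsupport ψ := fun hc => hx (hKD (hts hc))
    have : ψ =ᶠ[𝓝 x] fun _ => 0 := notMem_tsupport_iff_eventuallyEq.1 hxK
    exact contDiffAt_const.congr_of_eventuallyEq this

lemma deriv_zero_right {f f1 : ℝ → ℝ} (hf : ∀ t, HasDerivAt f (f1 t) t) {b : ℝ}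
    (hfb : ∀ t, b < t → f t = 0) : ∀ t, b < t → f1 t = 0 := by
  intro t ht
  have h1 : HasDerivAt f 0 t := by
    refine (hasDerivAt_const t (0:ℝ)).congr_of_eventuallyEq ?_
    filter_upwards [lt_mem_nhds ht] with y hy
    exact hfb y hy
  exact (hf t).unique h1

lemma ln_mem {N : ℕ} {ρ : ℝ} {Ω : Set (Euc N)} (hρ : 0 < ρ) {x : Euc N}
    (hx : x ∈ coneGT N ρ Ω) : exp (ln x) = ‖x‖ ∧ log ρ < ln x := by
  have hx0 : 0 < ‖x‖ := hρ.trans hx.1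
  exact ⟨exp_log hx0, log_lt_log hρ hx.1⟩

lemma JJ_bound {N : ℕ} {Ω : Set (Euc N)} {l : ℝ} {φ : Euc N → ℝ}
    (h : DirichletEigenpair N Ω l φ) {ρ : ℝ} (hρ : 0 < ρ) {f f1 f2 : ℝ → ℝ}
    (hf : ∀ t, HasDerivAt f (f1 t) t) (hf1 : ∀ t, HasDerivAt f1 (f2 t) t) (hf2 : Continuous f2)
    {b : ℝ} (hfb : ∀ t, b ≤ t → f t = 0) {w : Euc N → ℝ} (hw : Adm N ρ Ω w) (μ : ℝ) :
    ∃ C : ℝ, ∀ x ∈ coneGT N ρ Ω, ∀ g g1 : ℝ, 0 ≤ g → g ≤ 1 → 0 ≤ g1 → g1 ≤ 1 →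
      |w x * (‖x‖^2)⁻¹ * (-(f2 (ln x) + (N - 2) * f1 (ln x)) * g + l * f (ln x) * Ph φ x * g1
        - μ * f (ln x) * g)| ≤ (Metric.closedBall (0:Euc N) (exp b)).indicator (fun _ => C) x := by
  have cf : Continuous f := continuous_iff_continuousAt.2 fun x => (hf x).continuousAt
  have cf1 : Continuous f1 := continuous_iff_continuousAt.2 fun x => (hf1 x).continuousAt
  have z0 : ∀ t, b < t → f t = 0 := fun t ht => hfb t ht.le
  have z1 := deriv_zero_right hf z0
  have z2 := deriv_zero_right hf1 z1
  obtain ⟨M0, hM0⟩ := (isCompact_Icc (a := log ρ) (b := b)).exists_bound_of_continuousOn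
    cf.continuousOn
  obtain ⟨M1, hM1⟩ := (isCompact_Icc (a := log ρ) (b := b)).exists_bound_of_continuousOn
    cf1.continuousOn
  obtain ⟨M2, hM2⟩ := (isCompact_Icc (a := log ρ) (b := b)).exists_bound_of_continuousOn
    hf2.continuousOn
  obtain ⟨B, hB0, hB⟩ := hw.bdd (exp b)
  refine ⟨B * (ρ^2)⁻¹ * ((M2 + |(N:ℝ) - 2| * M1) + |l| * M0 + |μ| * M0), ?_⟩
  intro x hx g g1 hg hg' hg1 hg1'
  have hx0 : 0 < ‖x‖ := hρ.trans hx.1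
  obtain ⟨e1, e2⟩ := ln_mem hρ hx
  by_cases hxb : ‖x‖ ≤ exp b
  · rw [indicator_of_mem (by simpa using hxb)]
    have hl : ln x ∈ Icc (log ρ) b := ⟨e2.le, by rw [← exp_le_exp, e1]; exact hxb⟩
    have m0 := hM0 _ hl
    have m1 := hM1 _ hl
    have m2 := hM2 _ hl
    rw [Real.norm_eq_abs] at m0 m1 m2
    have M00 : 0 ≤ M0 := (abs_nonneg _).trans m0
    have M10 : 0 ≤ M1 := (abs_nonneg _).trans m1
    have M20 : 0 ≤ M2 := (abs_nonneg _).trans m2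
    have hP := Ph_pos h (coneGT_sub hρ hx)
    have hP1 := Ph_le h (coneGT_sub hρ hx)
    have hwB := hB x hx hxb
    have hw0 := hw.pos x hx
    rw [abs_mul, abs_of_nonneg (by positivity : 0 ≤ w x * (‖x‖^2)⁻¹)]
    have hr : (‖x‖^2)⁻¹ ≤ (ρ^2)⁻¹ := by
      have := hx.1.le
      gcongr
    have t1 : |-(f2 (ln x) + (N - 2) * f1 (ln x)) * g| ≤ M2 + |(N:ℝ) - 2| * M1 := by
      rw [abs_mul, abs_neg, abs_of_nonneg hg]
      have : |f2 (ln x) + (N - 2) * f1 (ln x)| ≤ M2 + |(N:ℝ) - 2| * M1 := by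
        refine (abs_add_le _ _).trans ?_
        rw [abs_mul]; gcongr
      calc _ ≤ (M2 + |(N:ℝ) - 2| * M1) * 1 := by gcongr
        _ = _ := mul_one _
    have t2 : |l * f (ln x) * Ph φ x * g1| ≤ |l| * M0 := by
      rw [abs_mul, abs_mul, abs_mul, abs_of_nonneg hg1, abs_of_nonneg hP.le]
      calc _ ≤ |l| * M0 * 1 * 1 := by gcongr
        _ = _ := by ring
    have t3 : |μ * f (ln x) * g| ≤ |μ| * M0 := by
      rw [abs_mul, abs_mul, abs_of_nonneg hg]
      calc _ ≤ |μ| * M0 * 1 := by gcongr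
        _ = _ := by ring
    have t4 := abs_sub (-(f2 (ln x) + (N - 2) * f1 (ln x)) * g + l * f (ln x) * Ph φ x * g1)
      (μ * f (ln x) * g)
    have t5 := abs_add_le (-(f2 (ln x) + (N - 2) * f1 (ln x)) * g) (l * f (ln x) * Ph φ x * g1)
    have t6 : |-(f2 (ln x) + (N - 2) * f1 (ln x)) * g + l * f (ln x) * Ph φ x * g1
      - μ * f (ln x) * g| ≤ (M2 + |(N:ℝ) - 2| * M1) + |l| * M0 + |μ| * M0 := by linarith
    gcongr
  · rw [indicator_of_notMem (by simpa using hxb)]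
    have : b < ln x := by rw [← exp_lt_exp, e1]; exact not_le.1 hxb
    rw [z0 _ this, z1 _ this, z2 _ this]; simp

lemma ball_integ {N : ℕ} (D : Set (Euc N)) (R C : ℝ) :
    Integrable ((Metric.closedBall (0:Euc N) R).indicator (fun _ => C)) (volume.restrict D) := by
  have : Integrable ((Metric.closedBall (0:Euc N) R).indicator (fun _ => C)) volume := by
    rw [integrable_indicator_iff Metric.isClosed_closedBall.measurableSet]
    exact integrableOn_const (isCompact_closedBall (0:Euc N) R).measure_lt_top.ne
  exact this.integrableOn

lemma ln_contOn {N : ℕ} {ρ : ℝ} {Ω : Set (Euc N)} (hρ : 0 < ρ) :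
    ContinuousOn (ln (N := N)) (coneGT N ρ Ω) := fun x hx =>
  (ln_cd (coneGT_sub hρ hx).1).continuousAt.continuousWithinAt

lemma Ph_contOn {N : ℕ} {Ω : Set (Euc N)} {l : ℝ} {φ : Euc N → ℝ} (hΩ : IsConeDomain N Ω)
    (h : DirichletEigenpair N Ω l φ) {ρ : ℝ} (hρ : 0 < ρ) :
    ContinuousOn (Ph φ) (coneGT N ρ Ω) := fun x hx =>
  (Ph_cd hΩ h (coneGT_sub hρ hx)).continuousAt.continuousWithinAt

lemma inv_contOn {N : ℕ} {ρ : ℝ} {Ω : Set (Euc N)} (hρ : 0 < ρ) :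
    ContinuousOn (fun x : Euc N => (‖x‖^2)⁻¹) (coneGT N ρ Ω) := by
  refine ContinuousOn.inv₀ (by fun_prop) fun x hx => ?_
  have : 0 < ‖x‖ := hρ.trans hx.1
  positivity

lemma JJ_contOn {N : ℕ} {Ω : Set (Euc N)} {l : ℝ} {φ : Euc N → ℝ} (hΩ : IsConeDomain N Ω)
    (h : DirichletEigenpair N Ω l φ) {ρ : ℝ} (hρ : 0 < ρ) {f f1 f2 : ℝ → ℝ}
    (hf : ∀ t, HasDerivAt f (f1 t) t) (hf1 : ∀ t, HasDerivAt f1 (f2 t) t) (hf2 : Continuous f2)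
    {w : Euc N → ℝ} (hw : Adm N ρ Ω w) (μ : ℝ) {g g1 : ℝ → ℝ} (hg : Continuous g)
    (hg1 : Continuous g1) :
    ContinuousOn (fun x => w x * (‖x‖^2)⁻¹ * (-(f2 (ln x) + (N - 2) * f1 (ln x)) * g (Ph φ x)
      + l * f (ln x) * Ph φ x * g1 (Ph φ x) - μ * f (ln x) * g (Ph φ x))) (coneGT N ρ Ω) := by
  have cf : Continuous f := continuous_iff_continuousAt.2 fun x => (hf x).continuousAt
  have cf1 : Continuous f1 := continuous_iff_continuousAt.2 fun x => (hf1 x).continuousAt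
  have c0 := hw.cd.continuousOn
  have c1 := ln_contOn (N := N) (Ω := Ω) hρ
  have c2 := Ph_contOn hΩ h hρ
  have c3 := inv_contOn (N := N) (Ω := Ω) hρ
  have d0 := cf.comp_continuousOn c1
  have d1 := cf1.comp_continuousOn c1
  have d2 := hf2.comp_continuousOn c1
  have d3 := hg.comp_continuousOn c2
  have d4 := hg1.comp_continuousOn c2
  simp only [Function.comp_def] at d0 d1 d2 d3 d4
  fun_prop

lemma weakG {N : ℕ} {Ω : Set (Euc N)} {l : ℝ} {φ : Euc N → ℝ} (hΩ : IsConeDomain N Ω)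
    (h : DirichletEigenpair N Ω l φ) {ρ : ℝ} (hρ : 0 < ρ) {f f1 f2 : ℝ → ℝ}
    (hf : ∀ t, HasDerivAt f (f1 t) t) (hf1 : ∀ t, HasDerivAt f1 (f2 t) t) (hf2 : Continuous f2)
    (hf0 : ∀ t, 0 ≤ f t)
    {a b : ℝ} (ha : log ρ < a) (hfa : ∀ t, t ≤ a → f t = 0) (hfb : ∀ t, b ≤ t → f t = 0)
    {ε : ℝ} (hε : 0 < ε) {w : Euc N → ℝ} (hw : Adm N ρ Ω w) (μ : ℝ) :
    IntegrableOn (fun x => (-lap N w x - μ * (‖x‖^2)⁻¹ * w x) * (f (ln x) * GG ε (Ph φ x)))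
      (coneGT N ρ Ω) ∧
    IntegrableOn (fun x => w x * (‖x‖^2)⁻¹ * (-(f2 (ln x) + (N - 2) * f1 (ln x)) * GG ε (Ph φ x)
      + l * f (ln x) * Ph φ x * GG1 ε (Ph φ x) - μ * f (ln x) * GG ε (Ph φ x))) (coneGT N ρ Ω) ∧
    ∫ x in coneGT N ρ Ω, (-lap N w x - μ * (‖x‖^2)⁻¹ * w x) * (f (ln x) * GG ε (Ph φ x)) ≤
      ∫ x in coneGT N ρ Ω, w x * (‖x‖^2)⁻¹ * (-(f2 (ln x) + (N - 2) * f1 (ln x)) * GG ε (Ph φ x)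
      + l * f (ln x) * Ph φ x * GG1 ε (Ph φ x) - μ * f (ln x) * GG ε (Ph φ x)) := by
  set D := coneGT N ρ Ω with hD
  have hDo : IsOpen D := coneGT_open hρ hΩ
  have hDm := hDo.measurableSet
  obtain ⟨ψ, hψ, hψc, hψs, hψe⟩ := testfun hΩ h hρ hf hf1 hf2 ha hfa hfb hε
  have hwc : ∀ x ∈ D, ContDiffAt ℝ 2 w x := fun x hx => hw.cd.contDiffAt (hDo.mem_nhds hx)
  obtain ⟨i1, i2, e⟩ := green hψ hψc (fun x hx => hwc x (hψs hx))
  have gc : Continuous (GG ε) := continuous_iff_continuousAt.2 fun x => (GG_deriv hε x).continuousAt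
  have g1c : Continuous (GG1 ε) := continuous_iff_continuousAt.2 fun x => (GG_deriv2 x).continuousAt
  have gb : ∀ x ∈ D, 0 ≤ GG ε (Ph φ x) ∧ GG ε (Ph φ x) ≤ 1 := fun x hx =>
    ⟨GG_nonneg hε _, (GG_le hε (Ph_pos h (coneGT_sub hρ hx)).le).trans
      (Ph_le h (coneGT_sub hρ hx))⟩
  have iR : IntegrableOn (fun x => w x * (‖x‖^2)⁻¹ *
      (-(f2 (ln x) + (N - 2) * f1 (ln x)) * GG ε (Ph φ x)
      + l * f (ln x) * Ph φ x * GG1 ε (Ph φ x) - μ * f (ln x) * GG ε (Ph φ x))) D := by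
    obtain ⟨C, hC⟩ := JJ_bound h hρ hf hf1 hf2 hfb hw μ
    refine (ball_integ D (exp b) C).mono'
      ((JJ_contOn hΩ h hρ hf hf1 hf2 hw μ gc g1c).aestronglyMeasurable hDm) ?_
    refine (ae_restrict_iff' hDm).2 (Eventually.of_forall fun x hx => ?_)
    exact hC x hx _ _ (gb x hx).1 (gb x hx).2 (kk_nonneg _) (kk_le_one _)
  have iM : IntegrableOn (fun x => μ * (w x * (‖x‖^2)⁻¹ * ψ x)) D := by
    have cp : Continuous ψ := hψ.continuous
    have : Integrable (fun x => w x * (‖x‖^2)⁻¹ * ψ x) := by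
      refine Continuous.integrable_of_hasCompactSupport ?_ ?_
      · rw [continuous_iff_continuousAt]
        intro x
        by_cases hx : x ∈ D
        · have e1 := (hwc x hx).continuousAt
          have e2 := (inv_contOn (N := N) (Ω := Ω) hρ).continuousAt (hDo.mem_nhds hx)
          exact (e1.mul e2).mul cp.continuousAt
        · have : ψ =ᶠ[𝓝 x] fun _ => 0 :=
            notMem_tsupport_iff_eventuallyEq.1 (fun hc => hx (hψs hc))
          refine (continuousAt_const (y := (0:ℝ))).congr ?_
          filter_upwards [this] with y hy
          rw [hy, mul_zero]
      · exact hψc.mul_left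
    exact (this.const_mul μ).integrableOn
  have i1n : IntegrableOn (fun x => -(ψ x * lap N w x)) D := i1.integrableOn.neg
  have i2n : IntegrableOn (fun x => -(w x * lap N ψ x)) D := i2.integrableOn.neg
  have iL : IntegrableOn (fun x => -(ψ x * lap N w x) - μ * (w x * (‖x‖^2)⁻¹ * ψ x)) D :=
    i1n.sub iM
  have eL : EqOn (fun x => -(ψ x * lap N w x) - μ * (w x * (‖x‖^2)⁻¹ * ψ x))
      (fun x => (-lap N w x - μ * (‖x‖^2)⁻¹ * w x) * (f (ln x) * GG ε (Ph φ x))) D := by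
    intro x hx
    simp only [hψe x hx]; ring
  refine ⟨iL.congr_fun eL hDm, iR, ?_⟩
  rw [← setIntegral_congr_fun hDm eL, integral_sub i1n iM, integral_neg]
  have s1 : ∫ x in D, ψ x * lap N w x = ∫ x, ψ x * lap N w x := by
    refine setIntegral_eq_integral_of_forall_compl_eq_zero fun x hx => ?_
    have : ψ x = 0 := image_eq_zero_of_notMem_tsupport fun hc => hx (hψs hc)
    rw [this, zero_mul]
  have s2 : ∫ x in D, w x * lap N ψ x = ∫ x, w x * lap N ψ x := by
    refine setIntegral_eq_integral_of_forall_compl_eq_zero fun x hx => ?_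
    have : ψ =ᶠ[𝓝 x] fun _ => 0 :=
      notMem_tsupport_iff_eventuallyEq.1 (fun hc => hx (hψs hc))
    rw [lap_congr this]
    have : lap N (fun _ : Euc N => (0:ℝ)) x = 0 := by
      unfold lap
      simp [iteratedFDeriv_zero_fun]
    rw [this, mul_zero]
  rw [s1, e, ← s2, ← integral_neg, ← integral_sub i2n iM]
  refine setIntegral_mono_on (i2n.sub iM) iR hDm ?_
  intro x hx
  have hxc := coneGT_sub hρ hx
  have : lap N ψ x = lap N (fun y => f (ln y) * GG ε (Ph φ y)) x := by
    refine lap_congr ?_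
    filter_upwards [hDo.mem_nhds hx] with y hy
    exact hψe y hy
  rw [this, (lap_test hΩ h hf hf1 hf2 (GG_deriv hε) GG_deriv2 GG2_cont hxc).2, hψe x hx]
  have hG2 : 0 ≤ GG2 ε (Ph φ x) := div_nonneg (kk1_nonneg _) hε.le
  have hS : 0 ≤ ∑ i, pd i (Ph φ) x ^ 2 := Finset.sum_nonneg fun i _ => sq_nonneg _
  have : 0 ≤ w x * (f (ln x) * (GG2 ε (Ph φ x) * ∑ i, pd i (Ph φ) x ^ 2)) :=
    mul_nonneg (hw.pos x hx).le (mul_nonneg (hf0 _) (mul_nonneg hG2 hS))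
  linarith

lemma weak {N : ℕ} {Ω : Set (Euc N)} {l : ℝ} {φ : Euc N → ℝ} (hΩ : IsConeDomain N Ω)
    (h : DirichletEigenpair N Ω l φ) {ρ : ℝ} (hρ : 0 < ρ) {f f1 f2 : ℝ → ℝ}
    (hf : ∀ t, HasDerivAt f (f1 t) t) (hf1 : ∀ t, HasDerivAt f1 (f2 t) t) (hf2 : Continuous f2)
    (hf0 : ∀ t, 0 ≤ f t)
    {a b : ℝ} (ha : log ρ < a) (hfa : ∀ t, t ≤ a → f t = 0) (hfb : ∀ t, b ≤ t → f t = 0)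
    {w : Euc N → ℝ} (hw : Adm N ρ Ω w) (μ : ℝ)
    (hL : ∀ x ∈ coneGT N ρ Ω, 0 ≤ -lap N w x - μ * (‖x‖^2)⁻¹ * w x) :
    IntegrableOn (fun x => -(w x * (‖x‖^2)⁻¹ * ((f2 (ln x) + (N - 2) * f1 (ln x)
      - (l - μ) * f (ln x)) * Ph φ x))) (coneGT N ρ Ω) ∧
    0 ≤ (∫ x in coneGT N ρ Ω, -(w x * (‖x‖^2)⁻¹ *
        ((f2 (ln x) + (N - 2) * f1 (ln x) - (l - μ) * f (ln x)) * Ph φ x))) ∧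
    ∫⁻ x in coneGT N ρ Ω, ENNReal.ofReal
        ((-lap N w x - μ * (‖x‖^2)⁻¹ * w x) * (f (ln x) * Ph φ x)) ≤
      ENNReal.ofReal (∫ x in coneGT N ρ Ω, -(w x * (‖x‖^2)⁻¹ *
        ((f2 (ln x) + (N - 2) * f1 (ln x) - (l - μ) * f (ln x)) * Ph φ x))) := by
  set D := coneGT N ρ Ω with hD
  have hDo : IsOpen D := coneGT_open hρ hΩ
  have hDm := hDo.measurableSet
  obtain ⟨C, hC⟩ := JJ_bound h hρ hf hf1 hf2 hfb hw μ
  set ε : ℕ → ℝ := fun n => 1 / ((n:ℝ) + 1) with hεd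
  have hε : ∀ n, 0 < ε n := fun n => by positivity
  have W := fun n => weakG hΩ h hρ hf hf1 hf2 hf0 ha hfa hfb (hε n) hw μ
  have eqR : ∀ x, w x * (‖x‖^2)⁻¹ * (-(f2 (ln x) + (N - 2) * f1 (ln x)) * Ph φ x
      + l * f (ln x) * Ph φ x * 1 - μ * f (ln x) * Ph φ x) = -(w x * (‖x‖^2)⁻¹ *
        ((f2 (ln x) + (N - 2) * f1 (ln x) - (l - μ) * f (ln x)) * Ph φ x)) := fun x => by ring
  have iR : IntegrableOn (fun x => w x * (‖x‖^2)⁻¹ *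
      (-(f2 (ln x) + (N - 2) * f1 (ln x)) * Ph φ x
      + l * f (ln x) * Ph φ x * 1 - μ * f (ln x) * Ph φ x)) D := by
    refine (ball_integ D (exp b) C).mono'
      ((JJ_contOn hΩ h hρ hf hf1 hf2 hw μ (g := fun t => t) (g1 := fun _ => 1)
        continuous_id continuous_const).aestronglyMeasurable hDm) ?_
    refine (ae_restrict_iff' hDm).2 (Eventually.of_forall fun x hx => ?_)
    exact hC x hx _ _ (Ph_pos h (coneGT_sub hρ hx)).le (Ph_le h (coneGT_sub hρ hx))
      zero_le_one le_rfl
  have T : Tendsto (fun n => ∫ x in D, w x * (‖x‖^2)⁻¹ *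
      (-(f2 (ln x) + (N - 2) * f1 (ln x)) * GG (ε n) (Ph φ x)
      + l * f (ln x) * Ph φ x * GG1 (ε n) (Ph φ x) - μ * f (ln x) * GG (ε n) (Ph φ x))) atTop
      (𝓝 (∫ x in D, w x * (‖x‖^2)⁻¹ *
      (-(f2 (ln x) + (N - 2) * f1 (ln x)) * Ph φ x
      + l * f (ln x) * Ph φ x * 1 - μ * f (ln x) * Ph φ x))) := by
    refine tendsto_integral_of_dominated_convergence _ (fun n => (W n).2.1.aestronglyMeasurable)
      (ball_integ D (exp b) C) ?_ ?_
    · intro n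
      refine (ae_restrict_iff' hDm).2 (Eventually.of_forall fun x hx => ?_)
      exact hC x hx _ _ (GG_nonneg (hε n) _) ((GG_le (hε n) (Ph_pos h (coneGT_sub hρ hx)).le).trans
        (Ph_le h (coneGT_sub hρ hx))) (kk_nonneg _) (kk_le_one _)
    · refine (ae_restrict_iff' hDm).2 (Eventually.of_forall fun x hx => ?_)
      have hP := Ph_pos h (coneGT_sub hρ hx)
      have t1 := GG_tendsto hP
      have t2 := GG1_tendsto hP
      exact ((((t1.const_mul _).add (t2.const_mul _)).sub (t1.const_mul _)).const_mul _)
  simp_rw [eqR] at iR T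
  have nn : ∀ n, 0 ≤ᵐ[volume.restrict D] fun x =>
      (-lap N w x - μ * (‖x‖^2)⁻¹ * w x) * (f (ln x) * GG (ε n) (Ph φ x)) := by
    intro n
    refine (ae_restrict_iff' hDm).2 (Eventually.of_forall fun x hx => ?_)
    exact mul_nonneg (hL x hx) (mul_nonneg (hf0 _) (GG_nonneg (hε n) _))
  refine ⟨iR, ge_of_tendsto' T fun n => (integral_nonneg_of_ae (nn n)).trans (W n).2.2, ?_⟩
  have F := lintegral_liminf_le' (u := atTop) (μ := volume.restrict D) (f := fun n x => ENNReal.ofReal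
    ((-lap N w x - μ * (‖x‖^2)⁻¹ * w x) * (f (ln x) * GG (ε n) (Ph φ x))))
    (fun n => (W n).1.aestronglyMeasurable.aemeasurable.ennreal_ofReal)
  refine le_trans (le_trans (le_of_eq ?_) F) ?_
  · refine setLIntegral_congr_fun hDm fun x hx => ?_
    have hP := Ph_pos h (coneGT_sub hρ hx)
    refine (Tendsto.liminf_eq ?_).symm
    refine ENNReal.tendsto_ofReal ?_
    exact ((GG_tendsto hP).const_mul _).const_mul _
  · rw [← (ENNReal.tendsto_ofReal T).liminf_eq]
    refine liminf_le_liminf (Eventually.of_forall fun n => ?_)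
    rw [← ofReal_integral_eq_lintegral_ofReal (W n).1 (nn n)]
    exact ENNReal.ofReal_le_ofReal (W n).2.2

/-- logarithmic annulus in the cone -/
def AT (N : ℕ) (ρ : ℝ) (Ω : Set (Euc N)) (T : ℝ) : Set (Euc N) :=
  coneGT N ρ Ω ∩ {x | T ≤ ln x ∧ ln x < T + 1}

lemma ln_meas {N : ℕ} : Measurable (ln (N := N)) := by
  unfold ln; fun_prop

lemma AT_sub {N : ℕ} {ρ : ℝ} {Ω : Set (Euc N)} {T : ℝ} : AT N ρ Ω T ⊆ coneGT N ρ Ω :=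
  inter_subset_left

lemma AT_meas {N : ℕ} {ρ : ℝ} {Ω : Set (Euc N)} (hρ : 0 < ρ) (hΩ : IsConeDomain N Ω) (T : ℝ) :
    MeasurableSet (AT N ρ Ω T) := by
  refine (coneGT_open hρ hΩ).measurableSet.inter ?_
  exact (measurableSet_le measurable_const ln_meas).inter
    (measurableSet_lt ln_meas measurable_const)

lemma AT_norm {N : ℕ} {ρ : ℝ} {Ω : Set (Euc N)} (hρ : 0 < ρ) {T : ℝ} {x : Euc N}
    (hx : x ∈ AT N ρ Ω T) : exp T ≤ ‖x‖ ∧ ‖x‖ ≤ exp (T + 1) := by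
  obtain ⟨e1, -⟩ := ln_mem hρ hx.1
  rw [← e1]
  exact ⟨exp_le_exp.2 hx.2.1, exp_le_exp.2 hx.2.2.le⟩

lemma integ_on {N : ℕ} {ρ : ℝ} {Ω : Set (Euc N)}
    {F : Euc N → ℝ} (hF : ContinuousOn F (coneGT N ρ Ω)) {S : Set (Euc N)}
    (hS : MeasurableSet S) (hSD : S ⊆ coneGT N ρ Ω) (R B : ℝ)
    (hR : ∀ x ∈ S, ‖x‖ ≤ R)
    (hB : ∀ x ∈ S, |F x| ≤ B) : IntegrableOn F S := by
  have : IsFiniteMeasure (volume.restrict S) :=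
    isFiniteMeasure_restrict.2 ((measure_mono (t := Metric.closedBall 0 R)
      (fun x hx => by simpa using hR x hx)).trans_lt
      (isCompact_closedBall (0:Euc N) R).measure_lt_top).ne
  refine Integrable.of_bound (C := B) ((hF.mono hSD).aestronglyMeasurable hS) ?_
  exact (ae_restrict_iff' hS).2 (Eventually.of_forall fun x hx => hB x hx)

lemma gs_facts {N : ℕ} (hN : 2 ≤ N) {l μ : ℝ} (hμ : μ ≤ CHconst N l) :
    gammaStar N l μ ≤ 0 ∧ gammaStar N l μ * (gammaStar N l μ + N - 2) = l - μ ∧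
      0 ≤ -(2 * gammaStar N l μ + N - 2) := by
  have hN' : (2:ℝ) ≤ N := by exact_mod_cast hN
  have h0 : 0 ≤ ((N : ℝ) - 2) ^ 2 + 4 * (l - μ) := by
    unfold CHconst at hμ; nlinarith
  have hs := Real.sq_sqrt h0
  have hs0 := Real.sqrt_nonneg (((N : ℝ) - 2) ^ 2 + 4 * (l - μ))
  unfold gammaStar
  refine ⟨by linarith, by nlinarith, by linarith⟩

lemma annulus_pos {N : ℕ} {ρ : ℝ} {Ω : Set (Euc N)} (hρ : 0 < ρ) (hΩ : IsConeDomain N Ω)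
    {t1 : ℝ} (ht1 : log ρ < t1) :
    0 < volume (coneGT N ρ Ω ∩ {x | t1 < ln x ∧ ln x < t1 + 1}) := by
  have ho : IsOpen (coneGT N ρ Ω ∩ {x | t1 < ln x ∧ ln x < t1 + 1}) :=
    (ln_contOn hρ).isOpen_inter_preimage (coneGT_open hρ hΩ) isOpen_Ioo
  refine ho.measure_pos volume ?_
  obtain ⟨ω, hω⟩ := hΩ.2.1.nonempty
  have hω1 : ‖ω‖ = 1 := by simpa using hΩ.1 hω
  have hn : ‖exp (t1 + 1/2) • ω‖ = exp (t1 + 1/2) := by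
    rw [norm_smul, hω1, mul_one, Real.norm_of_nonneg (exp_pos _).le]
  refine ⟨exp (t1 + 1/2) • ω, ⟨?_, ?_⟩, ?_⟩
  · rw [hn, ← exp_log hρ]; exact exp_lt_exp.2 (by linarith)
  · rw [hn, smul_smul, inv_mul_cancel₀ (exp_pos _).ne', one_smul]; exact hω
  · have : ln (exp (t1 + 1/2) • ω) = t1 + 1/2 := by unfold ln; rw [hn, log_exp]
    simp only [mem_ofPred_eq, this]; constructor <;> linarith

set_option maxHeartbeats 1000000 in
lemma AB {N : ℕ} (hN : 2 ≤ N) {Ω : Set (Euc N)} {l : ℝ} {φ : Euc N → ℝ} (hΩ : IsConeDomain N Ω)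
    (h : DirichletEigenpair N Ω l φ) {ρ : ℝ} (hρ : 0 < ρ) {μ : ℝ} (hμ : μ ≤ CHconst N l)
    {w : Euc N → ℝ} (hw : Adm N ρ Ω w)
    (hL : ∀ x ∈ coneGT N ρ Ω, 0 ≤ -lap N w x - μ * (‖x‖^2)⁻¹ * w x) :
    ∃ c C T0 : ℝ, 0 < c ∧ 0 < C ∧ ∀ T, T0 ≤ T →
      IntegrableOn (fun x => w x * Ph φ x) (AT N ρ Ω T) ∧
      c * exp (T * (N + gammaStar N l μ)) ≤ ∫ x in AT N ρ Ω T, w x * Ph φ x ∧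
      ∫⁻ x in AT N ρ Ω T, ENNReal.ofReal ((-lap N w x - μ * (‖x‖^2)⁻¹ * w x) * Ph φ x) ≤
        ENNReal.ofReal (C * exp (-2 * T) * ∫ x in AT N ρ Ω T, w x * Ph φ x) := by
  obtain ⟨hg0, hgq, hd⟩ := gs_facts hN hμ
  set gs := gammaStar N l μ with hgs
  set d := -(2 * gs + N - 2) with hdd
  set D := coneGT N ρ Ω with hD
  have hDo : IsOpen D := coneGT_open hρ hΩ
  have hDm := hDo.measurableSet
  set t1 := log ρ + 1 with ht1
  obtain ⟨C, c, hC, hc, Z⟩ := exists_zeta hd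
  set B := D ∩ {x : Euc N | t1 < ln x ∧ ln x < t1 + 1} with hBdef
  have hBm : MeasurableSet B := hDm.inter ((measurableSet_lt measurable_const ln_meas).inter
    (measurableSet_lt ln_meas measurable_const))
  set F2 : Euc N → ℝ := fun x => w x * (‖x‖^2)⁻¹ *
    (exp (gs * ln x) * (exp (d * (ln x - t1)) * kk1 (ln x - t1)) * Ph φ x) with hF2
  have cln := ln_contOn (N := N) (Ω := Ω) hρ
  have cPh := Ph_contOn hΩ h hρ
  have cin := inv_contOn (N := N) (Ω := Ω) hρ
  have cw := hw.cd.continuousOn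
  have F2c : ContinuousOn F2 D := by
    have hk : Continuous fun t => exp (gs * t) * (exp (d * (t - t1)) * kk1 (t - t1)) := by
      have := kk1_cont; fun_prop
    have := hk.comp_continuousOn cln
    exact (cw.mul cin).mul (this.mul cPh)
  have F2i : IntegrableOn F2 B := by
    obtain ⟨Bw, hBw0, hBw⟩ := hw.bdd (exp (t1 + 1))
    have hk : Continuous fun t => exp (gs * t) * (exp (d * (t - t1)) * kk1 (t - t1)) := by
      have := kk1_cont; fun_prop
    obtain ⟨M, hM⟩ := (isCompact_Icc (a := t1) (b := t1 + 1)).exists_bound_of_continuousOn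
      hk.continuousOn
    have hR : ∀ x ∈ B, ‖x‖ ≤ exp (t1 + 1) := by
      intro x hx
      rw [← (ln_mem hρ hx.1).1]
      exact exp_le_exp.2 hx.2.2.le
    refine integ_on F2c hBm inter_subset_left (exp (t1 + 1)) (Bw * (ρ^2)⁻¹ * (M * 1)) hR ?_
    intro x hx
    have m := hM (ln x) ⟨hx.2.1.le, hx.2.2.le⟩
    rw [Real.norm_eq_abs] at m
    have M0 : 0 ≤ M := (abs_nonneg _).trans m
    have w0 := hw.pos x hx.1
    have p0 := Ph_pos h (coneGT_sub hρ hx.1)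
    have p1 := Ph_le h (coneGT_sub hρ hx.1)
    have hr : (‖x‖^2)⁻¹ ≤ (ρ^2)⁻¹ := by
      have := hx.1.1.le
      gcongr
    simp only [hF2]
    rw [abs_mul, abs_mul, abs_mul (_ * _) (Ph φ x), abs_of_pos w0, abs_of_pos p0,
      abs_of_nonneg (by positivity : 0 ≤ (‖x‖^2)⁻¹)]
    have := hBw x hx.1 (hR x hx)
    gcongr
  have F2p : ∀ x ∈ B, 0 < F2 x := by
    intro x hx
    have w0 := hw.pos x hx.1
    have p0 := Ph_pos h (coneGT_sub hρ hx.1)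
    have x0 : 0 < ‖x‖ := hρ.trans hx.1.1
    have : 0 < kk1 (ln x - t1) := kk1_pos (by linarith [hx.2.1])
    simp only [hF2]; positivity
  set c0 := ∫ x in B, F2 x with hc0
  have c0pos : 0 < c0 := by
    rw [hc0, setIntegral_pos_iff_support_of_nonneg_ae]
    · refine (annulus_pos hρ hΩ (t1 := t1) (by linarith)).trans_le (measure_mono ?_)
      intro x hx
      exact ⟨(F2p x hx).ne', hx⟩
    · exact (ae_restrict_iff' hBm).2 (Eventually.of_forall fun x hx => (F2p x hx).le)
    · exact F2i
  set C1 := C * exp (-(d * t1)) with hC1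
  have C1p : 0 < C1 := by positivity
  set c2 := c * exp (-(d * t1)) * exp gs with hc2
  have c2p : 0 < c2 := by positivity
  refine ⟨c0 / C1, C1 / c2, t1 + 2, by positivity, by positivity, fun T hT => ?_⟩
  set A := AT N ρ Ω T with hA
  have hAm : MeasurableSet A := AT_meas hρ hΩ T
  have hAD : A ⊆ D := AT_sub
  have wPi : IntegrableOn (fun x => w x * Ph φ x) A := by
    obtain ⟨Bw, hBw0, hBw⟩ := hw.bdd (exp (T + 1))
    refine integ_on (cw.mul cPh) hAm hAD (exp (T + 1)) (Bw * 1)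
      (fun x hx => (AT_norm hρ hx).2) ?_
    intro x hx
    have w0 := hw.pos x hx.1
    have p0 := Ph_pos h (coneGT_sub hρ hx.1)
    have p1 := Ph_le h (coneGT_sub hρ hx.1)
    have := hBw x hx.1 (AT_norm hρ hx).2
    change |w x * Ph φ x| ≤ _
    rw [abs_mul, abs_of_pos w0, abs_of_pos p0]
    gcongr
  set X := ∫ x in A, w x * Ph φ x with hX
  have X0 : 0 ≤ X := setIntegral_nonneg hAm fun x hx =>
    (mul_pos (hw.pos x hx.1) (Ph_pos h (coneGT_sub hρ hx.1))).le
  obtain ⟨ζ, ζ1, ζ2, dζ, dζ1, cζ2, ζnn, ζz, ζz', Zpos, Zwin, Zlow, Zbase⟩ :=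
    Z (T - t1) (by linarith)
  set f : ℝ → ℝ := fun t => exp (gs * t) * ζ (t - t1) with hf
  set f1 : ℝ → ℝ := fun t => exp (gs * t) * (gs * ζ (t - t1) + ζ1 (t - t1)) with hf1
  set f2 : ℝ → ℝ := fun t => exp (gs * t) *
    (gs * (gs * ζ (t - t1) + ζ1 (t - t1)) + (gs * ζ1 (t - t1) + ζ2 (t - t1))) with hf2
  have de : ∀ t, HasDerivAt (fun t => exp (gs * t)) (exp (gs * t) * gs) t := fun t => by
    simpa using ((hasDerivAt_id t).const_mul gs).exp
  have d0 : ∀ t, HasDerivAt (fun t => ζ (t - t1)) (ζ1 (t - t1)) t := fun t =>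
    (dζ (t - t1)).comp_sub_const t t1
  have d1 : ∀ t, HasDerivAt (fun t => ζ1 (t - t1)) (ζ2 (t - t1)) t := fun t =>
    (dζ1 (t - t1)).comp_sub_const t t1
  have df : ∀ t, HasDerivAt f (f1 t) t := fun t =>
    ((de t).mul (d0 t)).congr_deriv (by simp only [hf1]; ring)
  have df1 : ∀ t, HasDerivAt f1 (f2 t) t := fun t =>
    ((de t).mul (((d0 t).const_mul gs).add (d1 t))).congr_deriv (by simp only [hf2, Pi.add_apply]; ring)
  have cf2 : Continuous f2 := by
    have c1 : Continuous ζ := continuous_iff_continuousAt.2 fun x => (dζ x).continuousAt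
    have c2 : Continuous ζ1 := continuous_iff_continuousAt.2 fun x => (dζ1 x).continuousAt
    simp only [hf2]; fun_prop
  have ident : ∀ t, f2 t + (N - 2) * f1 t - (l - μ) * f t
      = exp (gs * t) * (ζ2 (t - t1) - d * ζ1 (t - t1)) := fun t => by
    simp only [hf2, hf1, hf, ← hgq, hdd]; ring
  obtain ⟨iR, I0, W⟩ := weak hΩ h hρ df df1 cf2
    (fun t => mul_nonneg (exp_pos _).le (ζnn _)) (a := t1) (b := t1 + 2 * (T - t1))
    (by linarith) (fun t ht => by simp only [hf]; rw [ζz _ (by linarith), mul_zero])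
    (fun t ht => by simp only [hf]; rw [ζz' _ (by linarith), mul_zero]) hw μ hL
  simp_rw [ident] at iR I0 W
  set I := ∫ x in D, -(w x * (‖x‖^2)⁻¹ *
    (exp (gs * ln x) * (ζ2 (ln x - t1) - d * ζ1 (ln x - t1)) * Ph φ x)) with hI
  set k1 := C1 * exp (T * (d + gs - 2)) with hk1
  have hkey : I ≤ k1 * X - c0 := by
    have e1 : k1 * X = ∫ x in D, A.indicator (fun x => k1 * (w x * Ph φ x)) x := by
      rw [setIntegral_indicator hAm, inter_eq_self_of_subset_right hAD, integral_const_mul]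
    have e2 : c0 = ∫ x in D, B.indicator F2 x := by
      rw [setIntegral_indicator hBm, inter_eq_self_of_subset_right inter_subset_left]
    have i1 : IntegrableOn (A.indicator (fun x => k1 * (w x * Ph φ x))) D := by
      have : IntegrableOn (fun x => k1 * (w x * Ph φ x)) A := wPi.const_mul k1
      exact ((integrable_indicator_iff hAm).2 this).integrableOn
    have i2 : IntegrableOn (B.indicator F2) D :=
      ((integrable_indicator_iff hBm).2 F2i).integrableOn
    rw [e1, e2, ← integral_sub i1 i2]
    refine setIntegral_mono_on iR (i1.sub i2) hDm ?_
    intro x hx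
    have w0 := hw.pos x hx
    have p0 := Ph_pos h (coneGT_sub hρ hx)
    have x0 : 0 < ‖x‖ := hρ.trans hx.1
    obtain ⟨en, -⟩ := ln_mem hρ hx
    by_cases hxA : x ∈ A
    · have hxB : x ∉ B := fun hb => by linarith [hxA.2.1, hb.2.2]
      rw [indicator_of_mem hxA, indicator_of_notMem hxB, sub_zero]
      have z := Zwin (ln x - t1) ⟨by linarith [hxA.2.1], by linarith [hxA.2.2]⟩
      have hr : (‖x‖^2)⁻¹ * exp (gs * ln x) ≤ exp ((gs - 2) * T) := by
        rw [← en, ← exp_nat_mul, ← exp_neg, ← exp_add]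
        apply exp_le_exp.2
        push_cast
        nlinarith [hxA.2.1]
      have e3 : k1 = C * exp (d * (T - t1)) * exp ((gs - 2) * T) := by
        rw [hk1, hC1, mul_assoc, mul_assoc, ← exp_add, ← exp_add]; congr 2; ring
      calc -(w x * (‖x‖^2)⁻¹ *
            (exp (gs * ln x) * (ζ2 (ln x - t1) - d * ζ1 (ln x - t1)) * Ph φ x))
          = (w x * Ph φ x) * (((‖x‖^2)⁻¹ * exp (gs * ln x)) *
            (-(ζ2 (ln x - t1) - d * ζ1 (ln x - t1)))) := by ring
        _ ≤ (w x * Ph φ x) * (exp ((gs - 2) * T) * (C * exp (d * (T - t1)))) := by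
            refine mul_le_mul_of_nonneg_left ?_ (by positivity)
            refine (mul_le_mul_of_nonneg_left (by linarith :
              -(ζ2 (ln x - t1) - d * ζ1 (ln x - t1)) ≤ C * exp (d * (T - t1)))
              (by positivity)).trans ?_
            gcongr
        _ = k1 * (w x * Ph φ x) := by rw [e3]; ring
    · rw [indicator_of_notMem hxA]
      have hout : ln x - t1 ∉ Ico (T - t1) (T - t1 + 1) := fun hcon =>
        hxA ⟨hx, by linarith [hcon.1], by linarith [hcon.2]⟩
      by_cases hxB : x ∈ B
      · rw [indicator_of_mem hxB, Zbase (ln x - t1) (by linarith [hxB.2.2])]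
        simp only [hF2]; linarith
      · rw [indicator_of_notMem hxB]
        have z := Zpos _ hout
        simp only [sub_zero, neg_nonpos]
        positivity
  refine ⟨wPi, ?_, ?_⟩
  · have : c0 ≤ k1 * X := by linarith
    have e3 : exp (T * (N + gs)) * exp (T * (d + gs - 2)) = 1 := by
      rw [← exp_add, ← exp_zero]; congr 1; rw [hdd]; ring
    have ep := exp_pos (T * (N + gs))
    calc c0 / C1 * exp (T * (N + gs)) ≤ (k1 * X) / C1 * exp (T * (N + gs)) := by gcongr
      _ = (exp (T * (N + gs)) * exp (T * (d + gs - 2))) * X := by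
        rw [hk1]; field_simp
      _ = X := by rw [e3, one_mul]
  · set k2 := c2 * exp (T * (d + gs)) with hk2
    have k2p : 0 < k2 := by positivity
    have s1 : ENNReal.ofReal k2 * ∫⁻ x in A, ENNReal.ofReal
        ((-lap N w x - μ * (‖x‖^2)⁻¹ * w x) * Ph φ x) ≤ ENNReal.ofReal (k1 * X) := by
      rw [← lintegral_const_mul' _ _ ENNReal.ofReal_ne_top]
      calc _ ≤ ∫⁻ x in A, ENNReal.ofReal
            ((-lap N w x - μ * (‖x‖^2)⁻¹ * w x) * (f (ln x) * Ph φ x)) := by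
            refine setLIntegral_mono' hAm fun x hx => ?_
            rw [← ENNReal.ofReal_mul k2p.le]
            refine ENNReal.ofReal_le_ofReal ?_
            have p0 := Ph_pos h (coneGT_sub hρ hx.1)
            have l0 := hL x hx.1
            have z := Zlow (ln x - t1) ⟨by linarith [hx.2.1], by linarith [hx.2.2]⟩
            have hk : k2 ≤ f (ln x) := by
              have : exp (gs * (T + 1)) ≤ exp (gs * ln x) :=
                exp_le_exp.2 (by nlinarith [hx.2.2])
              calc k2 = exp (gs * (T + 1)) * (c * exp (d * (T - t1))) := by
                    rw [hk2, hc2]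
                    have : exp (-(d * t1)) * exp gs * exp (T * (d + gs))
                      = exp (gs * (T + 1)) * exp (d * (T - t1)) := by
                      rw [← exp_add, ← exp_add, ← exp_add]; congr 1; ring
                    calc _ = c * (exp (-(d * t1)) * exp gs * exp (T * (d + gs))) := by ring
                      _ = _ := by rw [this]; ring
                _ ≤ exp (gs * ln x) * ζ (ln x - t1) := by gcongr
            calc k2 * ((-lap N w x - μ * (‖x‖^2)⁻¹ * w x) * Ph φ x)
                = (-lap N w x - μ * (‖x‖^2)⁻¹ * w x) * (k2 * Ph φ x) := by ring
              _ ≤ _ := by gcongr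
        _ ≤ ∫⁻ x in D, ENNReal.ofReal
            ((-lap N w x - μ * (‖x‖^2)⁻¹ * w x) * (f (ln x) * Ph φ x)) := lintegral_mono_set hAD
        _ ≤ ENNReal.ofReal I := W
        _ ≤ _ := ENNReal.ofReal_le_ofReal (by linarith)
    have e4 : C1 / c2 * exp (-2 * T) * X = k2⁻¹ * (k1 * X) := by
      have : exp (T * (d + gs - 2)) = exp (T * (d + gs)) * exp (-2 * T) := by
        rw [← exp_add]; congr 1; ring
      rw [hk1, hk2, this]
      have := exp_pos (T * (d + gs))
      field_simp
    rw [e4, ENNReal.ofReal_mul (by positivity), ENNReal.ofReal_inv_of_pos k2p]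
    rw [mul_comm _ (ENNReal.ofReal (k1 * X)), ← ENNReal.div_eq_inv_mul.trans (mul_comm _ _)]
    rw [ENNReal.le_div_iff_mul_le (Or.inl (by simpa using k2p)) (Or.inl ENNReal.ofReal_ne_top),
      mul_comm]
    exact s1

lemma adm_of {N : ℕ} {ρ : ℝ} {Ω : Set (Euc N)} {u : Euc N → ℝ}
    (h1 : ContDiffOn ℝ 2 u (coneGT N ρ Ω)) (h2 : ContinuousOn u (closure (coneGT N ρ Ω)))
    (h3 : ∀ x ∈ coneGT N ρ Ω, 0 < u x) : Adm N ρ Ω u := by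
  refine ⟨h1, h3, fun b => ?_⟩
  have hc : IsCompact (closure (coneGT N ρ Ω) ∩ Metric.closedBall 0 b) :=
    (isCompact_closedBall (0:Euc N) b).inter_left isClosed_closure
  obtain ⟨B, hB⟩ := hc.exists_bound_of_continuousOn (h2.mono inter_subset_left)
  refine ⟨max B 0, le_max_right _ _, fun x hx hxb => ?_⟩
  have := hB x ⟨subset_closure hx, by simpa using hxb⟩
  exact (le_abs_self _).trans (this.trans (le_max_left _ _))

lemma gm_pt {N : ℕ} {h v : Euc N → ℝ} {x : Euc N} {a p K : ℝ} (ha : 0 ≤ a) (hp : 0 ≤ p)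
    (hap : a + p = 1) (ch : ContDiffAt ℝ 2 h x) (cv : ContDiffAt ℝ 2 v x)
    (h0 : 0 < h x) (v0 : 0 < v x) (lh : lap N h x ≤ -K * h x) (lv : lap N v x ≤ -K * v x) :
    ContDiffAt ℝ 2 (fun y => exp (a * log (h y) + p * log (v y))) x ∧
    lap N (fun y => exp (a * log (h y) + p * log (v y))) x
      ≤ -K * exp (a * log (h x) + p * log (v x)) := by
  have key : ∀ (b : ℝ) (g : Euc N → ℝ), ContDiffAt ℝ 2 g x → 0 < g x →
      ContDiffAt ℝ 2 (fun y => b * log (g y)) x ∧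
      lap N (fun y => b * log (g y)) x
        = b * (g x)⁻¹ * lap N g x + -(b * ((g x)^2)⁻¹) * ∑ i, pd i g x ^ 2 ∧
      ∀ i, pd i (fun y => b * log (g y)) x = b * (g x)⁻¹ * pd i g x := by
    intro b g cg g0
    have cl : ContDiffAt ℝ 2 (fun t => b * log t) (g x) :=
      contDiffAt_const.mul (Real.contDiffAt_log.2 g0.ne')
    have e1 : ∀ t, 0 < t → HasDerivAt (fun t => b * log t) (b * t⁻¹) t := fun t ht =>
      (Real.hasDerivAt_log ht.ne').const_mul b
    have e2 : HasDerivAt (fun t => b * t⁻¹) (-(b * ((g x)^2)⁻¹)) (g x) :=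
      ((hasDerivAt_inv g0.ne').const_mul b).congr_deriv (by ring)
    refine ⟨cl.comp x cg, ?_, fun i => pd_comp (F := fun t => b * log t) (e1 _ g0) (cd_diff cg)⟩
    exact lap_comp (F := fun t => b * log t) (F1 := fun t => b * t⁻¹) cl
      (by filter_upwards [lt_mem_nhds g0] with t ht using e1 t ht) e2 cg
  obtain ⟨c1, l1, p1⟩ := key a h ch h0
  obtain ⟨c2, l2, p2⟩ := key p v cv v0
  have cS : ContDiffAt ℝ 2 (fun y => a * log (h y) + p * log (v y)) x := c1.add c2
  refine ⟨cS.exp, ?_⟩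
  rw [lap_comp (F := exp) (F1 := exp) (F2 := exp (a * log (h x) + p * log (v x)))
    Real.contDiff_exp.contDiffAt (Eventually.of_forall fun t => Real.hasDerivAt_exp t)
    (Real.hasDerivAt_exp _) cS, lap_add c1 c2, l1, l2]
  simp_rw [pd_add (cd_diff c1) (cd_diff c2), p1, p2]
  set E := exp (a * log (h x) + p * log (v x))
  have E0 : 0 < E := exp_pos _
  have hsum : ∑ i, (a * (h x)⁻¹ * pd i h x + p * (v x)⁻¹ * pd i v x) ^ 2 ≤
      a * ((h x)^2)⁻¹ * ∑ i, pd i h x ^ 2 + p * ((v x)^2)⁻¹ * ∑ i, pd i v x ^ 2 := by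
    rw [Finset.mul_sum, Finset.mul_sum, ← Finset.sum_add_distrib]
    refine Finset.sum_le_sum fun i _ => ?_
    set X := (h x)⁻¹ * pd i h x with hX
    set Y := (v x)⁻¹ * pd i v x with hY
    have e1 : a * (h x)⁻¹ * pd i h x + p * (v x)⁻¹ * pd i v x = a * X + p * Y := by
      rw [hX, hY]; ring
    have e2 : a * ((h x)^2)⁻¹ * pd i h x ^ 2 + p * ((v x)^2)⁻¹ * pd i v x ^ 2
        = a * X^2 + p * Y^2 := by
      rw [hX, hY, mul_pow, mul_pow, inv_pow, inv_pow]; ring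
    rw [e1, e2]
    have : a * X^2 + p * Y^2 - (a * X + p * Y)^2 = a * p * (X - Y)^2 := by
      have : p = 1 - a := by linarith
      subst this; ring
    nlinarith [mul_nonneg (mul_nonneg ha hp) (sq_nonneg (X - Y))]
  have q1 : a * (h x)⁻¹ * lap N h x ≤ -K * a := by
    calc _ ≤ a * (h x)⁻¹ * (-K * h x) := by gcongr
      _ = _ := by field_simp
  have q2 : p * (v x)⁻¹ * lap N v x ≤ -K * p := by
    calc _ ≤ p * (v x)⁻¹ * (-K * v x) := by gcongr
      _ = _ := by field_simp
  have q3 : -K * a + -K * p = -K := by rw [← mul_add, hap, mul_one]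
  rw [← mul_add, mul_comm (-K)]
  refine mul_le_mul_of_nonneg_left ?_ E0.le
  linarith

lemma gm {N : ℕ} (hN : 2 ≤ N) {Ω : Set (Euc N)} {l : ℝ} {φ : Euc N → ℝ} (hΩ : IsConeDomain N Ω)
    (h : DirichletEigenpair N Ω l φ) {ρ : ℝ} (hρ : 0 < ρ) {μ : ℝ} (hμ : μ ≤ CHconst N l)
    {v : Euc N → ℝ} (hv : Adm N ρ Ω v)
    (hL : ∀ x ∈ coneGT N ρ Ω, 0 ≤ -lap N v x - μ * (‖x‖^2)⁻¹ * v x) {p : ℝ} (hp : 0 < p)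
    (hp1 : p < 1) : ∃ w : Euc N → ℝ, Adm N ρ Ω w ∧
      (∀ x ∈ coneGT N ρ Ω, 0 ≤ -lap N w x - μ * (‖x‖^2)⁻¹ * w x) ∧
      ∀ x ∈ coneGT N ρ Ω, w x ≤ exp ((1 - p) * (gammaStar N l μ * ln x)) * v x ^ p := by
  obtain ⟨hg0, hgq, hd⟩ := gs_facts hN hμ
  set gs := gammaStar N l μ with hgs
  set D := coneGT N ρ Ω with hD
  have hDo : IsOpen D := coneGT_open hρ hΩ
  set H : Euc N → ℝ := fun y => exp (gs * ln y) * Ph φ y with hH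
  have de : ∀ t, HasDerivAt (fun t => exp (gs * t)) (gs * exp (gs * t)) t := fun t => by
    simpa [mul_comm] using ((hasDerivAt_id t).const_mul gs).exp
  have de1 : ∀ t, HasDerivAt (fun t => gs * exp (gs * t)) (gs * (gs * exp (gs * t))) t :=
    fun t => (de t).const_mul gs
  have HL : ∀ x ∈ D, ContDiffAt ℝ 2 H x ∧ lap N H x = -(μ * (‖x‖^2)⁻¹) * H x := by
    intro x hx
    obtain ⟨c, e⟩ := lap_test hΩ h (f := fun t => exp (gs * t)) de de1 (by fun_prop)
      (g := fun t => t) (g1 := fun _ => 1) (g2 := fun _ => 0) (fun t => hasDerivAt_id t)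
      (fun t => hasDerivAt_const t 1) continuous_const (coneGT_sub hρ hx)
    refine ⟨c, e.trans ?_⟩
    simp only [hH]
    have : l = μ + gs * (gs + N - 2) := by linarith
    rw [this]; ring
  have H0 : ∀ x ∈ D, 0 < H x := fun x hx =>
    mul_pos (exp_pos _) (Ph_pos h (coneGT_sub hρ hx))
  have Hle : ∀ x ∈ D, H x ≤ exp (gs * ln x) := fun x hx => by
    have := Ph_le h (coneGT_sub hρ hx)
    calc H x ≤ exp (gs * ln x) * 1 := by simp only [hH]; gcongr
      _ = _ := mul_one _
  have we : ∀ x ∈ D, exp ((1 - p) * log (H x) + p * log (v x)) = H x ^ (1 - p) * v x ^ p := by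
    intro x hx
    rw [rpow_def_of_pos (H0 x hx), rpow_def_of_pos (hv.pos x hx), ← exp_add]; congr 1; ring
  have G := fun x (hx : x ∈ D) => gm_pt (K := μ * (‖x‖^2)⁻¹) (by linarith : 0 ≤ 1 - p) hp.le
    (by ring) (HL x hx).1 (hv.cd.contDiffAt (hDo.mem_nhds hx)) (H0 x hx) (hv.pos x hx)
    (HL x hx).2.le (by linarith [hL x hx])
  refine ⟨fun x => exp ((1 - p) * log (H x) + p * log (v x)), ⟨?_, ?_, ?_⟩, ?_, ?_⟩
  · exact fun x hx => (G x hx).1.contDiffWithinAt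
  · exact fun x _ => exp_pos _
  · intro b
    obtain ⟨B, hB0, hB⟩ := hv.bdd b
    refine ⟨exp (gs * log ρ) + B, by positivity, fun x hx hxb => ?_⟩
    rw [we x hx]
    have q := Real.geom_mean_le_arith_mean2_weighted (by linarith : 0 ≤ 1 - p) hp.le (H0 x hx).le
      (hv.pos x hx).le (by ring)
    have q1 : H x ≤ exp (gs * log ρ) := (Hle x hx).trans
      (exp_le_exp.2 (by nlinarith [(ln_mem hρ hx).2]))
    have q2 := hB x hx hxb
    nlinarith [H0 x hx, hv.pos x hx]
  · intro x hx
    have := (G x hx).2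
    linarith
  · intro x hx
    change exp ((1 - p) * log (H x) + p * log (v x)) ≤ _
    rw [we x hx]
    have : exp ((1 - p) * (gs * ln x)) = exp (gs * ln x) ^ (1 - p) := by
      rw [← exp_mul]; congr 1; ring
    rw [this]
    have := Hle x hx
    have := (H0 x hx).le
    have := (hv.pos x hx).le
    have : 0 ≤ 1 - p := by linarith
    gcongr

lemma conv_lower {N : ℕ} (hN : 2 ≤ N) {α R : ℝ} (hα : 0 ≤ α)
    {f : Euc N → ℝ} {x : Euc N} {S : Set (Euc N)} (hS : MeasurableSet S)
    (hf : ∀ y ∈ S, 0 ≤ f y) (hR : ∀ y ∈ S, ‖x - y‖ ≤ R) (hR0 : 0 < R) :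
    ENNReal.ofReal (R ^ (-α)) * ∫⁻ y in S, ENNReal.ofReal (f y) ≤
      ∫⁻ y in S, ENNReal.ofReal (f y * ‖x - y‖ ^ (-α)) := by
  have : Nonempty (Fin N) := ⟨⟨0, by omega⟩⟩
  have : Nontrivial (Euc N) := inferInstance
  rw [← lintegral_const_mul' _ _ ENNReal.ofReal_ne_top]
  refine lintegral_mono_ae ?_
  have hne : ∀ᵐ y ∂(volume.restrict S), y ≠ x :=
    ae_restrict_of_ae (by simp [ae_iff])
  filter_upwards [hne, ae_restrict_mem hS] with y hy hyS
  have hR0' : 0 ≤ R ^ (-α) := by positivity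
  rw [← ENNReal.ofReal_mul hR0', mul_comm]
  refine ENNReal.ofReal_le_ofReal (mul_le_mul_of_nonneg_left ?_ (hf y hyS))
  have : 0 < ‖x - y‖ := norm_pos_iff.2 (sub_ne_zero.2 hy.symm)
  exact rpow_le_rpow_of_nonpos this (hR y hyS) (by linarith)

lemma volAT {N : ℕ} {Ω : Set (Euc N)} {ρ : ℝ} (hρ : 0 < ρ) : ∃ K : ℝ, 0 < K ∧
    ∀ T, volume (AT N ρ Ω T) ≤ ENNReal.ofReal (K * exp (T * N)) := by
  have hb : volume (Metric.ball (0:Euc N) 1) ≠ ⊤ := measure_ball_lt_top.ne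
  refine ⟨exp N * ((volume (Metric.ball (0:Euc N) 1)).toReal + 1), by positivity, fun T => ?_⟩
  calc volume (AT N ρ Ω T) ≤ volume (Metric.closedBall (0:Euc N) (exp (T + 1))) :=
        measure_mono fun x hx => by simpa using (AT_norm hρ hx).2
    _ = ENNReal.ofReal (exp (T + 1) ^ N) * volume (Metric.ball (0:Euc N) 1) := by
        rw [Measure.addHaar_closedBall _ _ (exp_pos _).le]; simp
    _ = ENNReal.ofReal (exp (T + 1) ^ N * (volume (Metric.ball (0:Euc N) 1)).toReal) := by
        rw [ENNReal.ofReal_mul (by positivity), ENNReal.ofReal_toReal hb]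
    _ ≤ _ := by
        refine ENNReal.ofReal_le_ofReal ?_
        have : exp (T + 1) ^ N = exp N * exp (T * N) := by
          rw [← exp_nat_mul, ← exp_add]; congr 1; ring
        rw [this]
        have := exp_pos (N:ℝ)
        have := exp_pos (T * (N:ℝ))
        nlinarith [mul_pos (exp_pos (N:ℝ)) (exp_pos (T * (N:ℝ)))]

lemma lowerVp {N : ℕ} (hN : 2 ≤ N) {Ω : Set (Euc N)} {l : ℝ} {φ : Euc N → ℝ}
    (hΩ : IsConeDomain N Ω)
    (h : DirichletEigenpair N Ω l φ) {ρ : ℝ} (hρ : 0 < ρ) {μ : ℝ} (hμ : μ ≤ CHconst N l)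
    {v : Euc N → ℝ} (hv : Adm N ρ Ω v)
    (hL : ∀ x ∈ coneGT N ρ Ω, 0 ≤ -lap N v x - μ * (‖x‖^2)⁻¹ * v x) {p : ℝ} (hp : 0 < p) :
    ∃ c T0 : ℝ, 0 < c ∧ ∀ T, T0 ≤ T → ENNReal.ofReal (c * exp (T * (N + p * gammaStar N l μ))) ≤
      ∫⁻ x in AT N ρ Ω T, ENNReal.ofReal (v x ^ p) := by
  obtain ⟨hg0, -, -⟩ := gs_facts hN hμ
  have hDm := (coneGT_open hρ hΩ).measurableSet
  rcases lt_or_ge p 1 with hp1 | hp1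
  · obtain ⟨w, hw, hwL, hwv⟩ := gm hN hΩ h hρ hμ hv hL hp hp1
    obtain ⟨c, C, T0, hc, -, E⟩ := AB hN hΩ h hρ hμ hw hwL
    refine ⟨c, T0, hc, fun T hT => ?_⟩
    obtain ⟨i, a, -⟩ := E T hT
    set gs := gammaStar N l μ
    have hAm : MeasurableSet (AT N ρ Ω T) := AT_meas hρ hΩ T
    set k := exp ((1 - p) * (gs * T)) with hk
    have k0 : 0 < k := exp_pos _
    have s1 : ENNReal.ofReal (c * exp (T * (N + gs))) ≤
        ENNReal.ofReal k * ∫⁻ x in AT N ρ Ω T, ENNReal.ofReal (v x ^ p) := by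
      refine (ENNReal.ofReal_le_ofReal a).trans ?_
      rw [ofReal_integral_eq_lintegral_ofReal i ((ae_restrict_iff' hAm).2
        (Eventually.of_forall fun x hx => (mul_pos (hw.pos x hx.1)
          (Ph_pos h (coneGT_sub hρ hx.1))).le)),
        ← lintegral_const_mul' _ _ ENNReal.ofReal_ne_top]
      refine setLIntegral_mono' hAm fun x hx => ?_
      rw [← ENNReal.ofReal_mul k0.le]
      refine ENNReal.ofReal_le_ofReal ?_
      have p1 := Ph_le h (coneGT_sub hρ hx.1)
      have w0 := (hw.pos x hx.1).le
      have v0 := (hv.pos x hx.1).le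
      calc w x * Ph φ x ≤ w x * 1 := by gcongr
        _ = w x := mul_one _
        _ ≤ _ := hwv x hx.1
        _ ≤ k * v x ^ p := by
          have : exp ((1 - p) * (gs * ln x)) ≤ k := by
            apply exp_le_exp.2
            have : gs * ln x ≤ gs * T := by nlinarith [hx.2.1]
            nlinarith
          gcongr
    have e1 : c * exp (T * (N + gs)) = k * (c * exp (T * (N + p * gs))) := by
      have : exp (T * (N + gs)) = k * exp (T * (N + p * gs)) := by
        rw [hk, ← exp_add]; congr 1; ring
      rw [this]; ring
    rw [e1, ENNReal.ofReal_mul k0.le] at s1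
    exact (ENNReal.mul_le_mul_iff_right (by simpa using k0) ENNReal.ofReal_ne_top).1 s1
  · obtain ⟨c, C, T0, hc, -, E⟩ := AB hN hΩ h hρ hμ hv hL
    obtain ⟨V, hV, vol⟩ := volAT (N := N) (Ω := Ω) hρ
    set gs := gammaStar N l μ
    set κ := c / (2 * V) with hκ
    have κ0 : 0 < κ := by positivity
    refine ⟨κ ^ (p - 1) * (c / 2), T0, by positivity, fun T hT => ?_⟩
    obtain ⟨i, a, -⟩ := E T hT
    have hAm : MeasurableSet (AT N ρ Ω T) := AT_meas hρ hΩ T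
    set K := κ * exp (gs * T) with hK
    have K0 : 0 < K := by positivity
    have s1 : ENNReal.ofReal (c * exp (T * (N + gs))) ≤
        ENNReal.ofReal (c / 2 * exp (T * (N + gs))) +
        ENNReal.ofReal (K ^ (1 - p)) * ∫⁻ x in AT N ρ Ω T, ENNReal.ofReal (v x ^ p) := by
      refine (ENNReal.ofReal_le_ofReal a).trans ?_
      rw [ofReal_integral_eq_lintegral_ofReal i ((ae_restrict_iff' hAm).2
        (Eventually.of_forall fun x hx => (mul_pos (hv.pos x hx.1)
          (Ph_pos h (coneGT_sub hρ hx.1))).le))]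
      calc _ ≤ ∫⁻ x in AT N ρ Ω T, (ENNReal.ofReal K +
              ENNReal.ofReal (K ^ (1 - p)) * ENNReal.ofReal (v x ^ p)) := by
            refine setLIntegral_mono' hAm fun x hx => ?_
            have v0 := hv.pos x hx.1
            have p1 := Ph_le h (coneGT_sub hρ hx.1)
            rw [← ENNReal.ofReal_mul (by positivity),
              ← ENNReal.ofReal_add K0.le (by positivity)]
            refine ENNReal.ofReal_le_ofReal ?_
            have q1 : v x * Ph φ x ≤ v x := by nlinarith
            refine q1.trans ?_
            rcases le_total (v x) K with hvK | hvK
            · have : 0 ≤ K ^ (1 - p) * v x ^ p := by positivity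
              linarith
            · have q2 : v x ^ (1 - p) ≤ K ^ (1 - p) :=
                rpow_le_rpow_of_nonpos K0 hvK (by linarith)
              have q3 : v x = v x ^ (1 - p) * v x ^ p := by
                rw [← rpow_add v0]; simp
              calc v x = v x ^ (1 - p) * v x ^ p := q3
                _ ≤ K ^ (1 - p) * v x ^ p := by gcongr
                _ ≤ _ := by linarith
        _ = ENNReal.ofReal K * volume (AT N ρ Ω T) + _ := by
            rw [lintegral_add_left measurable_const, setLIntegral_const,
              lintegral_const_mul' _ _ ENNReal.ofReal_ne_top]
        _ ≤ _ := by
            gcongr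
            calc ENNReal.ofReal K * volume (AT N ρ Ω T)
                ≤ ENNReal.ofReal K * ENNReal.ofReal (V * exp (T * N)) := by gcongr; exact vol T
              _ = ENNReal.ofReal (c / 2 * exp (T * (N + gs))) := by
                rw [← ENNReal.ofReal_mul K0.le]
                congr 1
                have : exp (T * (N + gs)) = exp (gs * T) * exp (T * N) := by
                  rw [← exp_add]; congr 1; ring
                rw [this, hK, hκ]; field_simp
    have e1 : c * exp (T * (N + gs)) = c / 2 * exp (T * (N + gs)) +
        K ^ (1 - p) * (κ ^ (p - 1) * (c / 2) * exp (T * (N + p * gs))) := by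
      have e2 : K ^ (1 - p) = κ ^ (1 - p) * exp ((gs * T) * (1 - p)) := by
        rw [hK, mul_rpow κ0.le (exp_pos _).le, ← exp_mul]
      have e3 : κ ^ (1 - p) * κ ^ (p - 1) = 1 := by
        rw [← rpow_add κ0]; simp
      have e4 : exp (T * (N + gs)) = exp ((gs * T) * (1 - p)) * exp (T * (N + p * gs)) := by
        rw [← exp_add]; congr 1; ring
      rw [e2, e4]
      have e5 : κ ^ (1 - p) * exp ((gs * T) * (1 - p)) *
          (κ ^ (p - 1) * (c / 2) * exp (T * (N + p * gs))) = (κ ^ (1 - p) * κ ^ (p - 1)) *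
          (c / 2 * (exp ((gs * T) * (1 - p)) * exp (T * (N + p * gs)))) := by ring
      rw [e5, e3]; ring
    rw [e1, ENNReal.ofReal_add (by positivity) (by positivity),
      ENNReal.ofReal_mul (by positivity : 0 ≤ K ^ (1 - p))] at s1
    have s2 := (ENNReal.add_le_add_iff_left ENNReal.ofReal_ne_top).1 s1
    have : 0 < K ^ (1 - p) := by positivity
    exact (ENNReal.mul_le_mul_iff_right (by simpa using this) ENNReal.ofReal_ne_top).1 s2

lemma case1 {N : ℕ} (hN : 2 ≤ N) {Ω : Set (Euc N)} {l : ℝ} {φ : Euc N → ℝ}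
    (hΩ : IsConeDomain N Ω)
    (h : DirichletEigenpair N Ω l φ) {ρ : ℝ} (hρ : 0 < ρ) {μ : ℝ} (hμ : μ ≤ CHconst N l)
    {v : Euc N → ℝ} (hv : Adm N ρ Ω v)
    (hL : ∀ x ∈ coneGT N ρ Ω, 0 ≤ -lap N v x - μ * (‖x‖^2)⁻¹ * v x) {p α : ℝ} (hp : 0 < p)
    (hα : 0 ≤ α) (hcr : p * (-(gammaStar N l μ)) ≤ (N : ℝ) - α) {x0 : Euc N}
    (hfin : rieszConv N α ρ Ω (fun y => v y ^ p) x0 < ⊤) : False := by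
  obtain ⟨c, T0, hc, E⟩ := lowerVp hN hΩ h hρ hμ hv hL hp
  set gs := gammaStar N l μ
  obtain ⟨k0, hk0⟩ := exists_nat_ge (max T0 (log (‖x0‖ + 1)))
  have hkT : T0 ≤ k0 := (le_max_left _ _).trans hk0
  have hkx : log (‖x0‖ + 1) ≤ k0 := (le_max_right _ _).trans hk0
  set A : ℕ → Set (Euc N) := fun k => AT N ρ Ω ((k0 + k : ℕ) : ℝ) with hA
  have hAm : ∀ k, MeasurableSet (A k) := fun k => AT_meas hρ hΩ _
  have hdis : Pairwise (Function.onFun Disjoint A) := by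
    intro i j hij
    rw [Function.onFun, Set.disjoint_left]
    intro x hi hj
    have a1 := hi.2
    have a2 := hj.2
    have b1 : (((k0 + i : ℕ) : ℝ)) < ((k0 + j : ℕ) : ℝ) + 1 := lt_of_le_of_lt a1.1 a2.2
    have b2 : (((k0 + j : ℕ) : ℝ)) < ((k0 + i : ℕ) : ℝ) + 1 := lt_of_le_of_lt a2.1 a1.2
    have b1' : k0 + i < k0 + j + 1 := by exact_mod_cast b1
    have b2' : k0 + j < k0 + i + 1 := by exact_mod_cast b2
    omega
  set c' := (2 * exp 1) ^ (-α) * c with hc'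
  have c'0 : 0 < c' := by positivity
  have low : ∀ k, ENNReal.ofReal c' ≤
      ∫⁻ y in A k, ENNReal.ofReal (v y ^ p * ‖x0 - y‖ ^ (-α)) := by
    intro k
    set T : ℝ := ((k0 + k : ℕ) : ℝ) with hT
    have hT0 : 0 ≤ T := Nat.cast_nonneg _
    have hTk : (k0:ℝ) ≤ T := by rw [hT]; exact_mod_cast Nat.le_add_right _ _
    have hx0 : ‖x0‖ ≤ exp (T + 1) := by
      have : ‖x0‖ + 1 ≤ exp T := by
        rw [← log_le_iff_le_exp (by positivity)]; linarith
      have := exp_le_exp.2 (by linarith : T ≤ T + 1)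
      linarith
    have q := conv_lower (α := α) (R := 2 * exp (T + 1)) hN hα (f := fun y => v y ^ p) (x := x0)
      (hAm k) (fun y hy => (rpow_pos_of_pos (hv.pos y hy.1) p).le) (fun y hy => by
        have := (AT_norm hρ hy).2
        have := norm_sub_le x0 y
        linarith) (by positivity)
    refine le_trans ?_ q
    refine le_trans ?_ (mul_le_mul_right (E T (hkT.trans hTk)) _)
    rw [← ENNReal.ofReal_mul (by positivity)]
    refine ENNReal.ofReal_le_ofReal ?_
    have e1 : (2 * exp (T + 1)) ^ (-α) = (2 * exp 1) ^ (-α) * exp (T * (-α)) := by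
      rw [exp_mul, ← mul_rpow (by positivity) (by positivity)]
      congr 1
      rw [exp_add]; ring
    rw [e1]
    have e2 : 1 ≤ exp (T * (-α)) * exp (T * (N + p * gs)) := by
      rw [← exp_add]
      apply one_le_exp
      have : T * (-α) + T * (N + p * gs) = T * (N - α - p * (-gs)) := by ring
      rw [this]
      exact mul_nonneg hT0 (by linarith)
    calc c' = c' * 1 := (mul_one _).symm
      _ ≤ c' * (exp (T * (-α)) * exp (T * (N + p * gs))) := by gcongr
      _ = _ := by rw [hc']; ring
  have : (⊤ : ℝ≥0∞) ≤ rieszConv N α ρ Ω (fun y => v y ^ p) x0 := by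
    calc (⊤ : ℝ≥0∞) = ∑' _ : ℕ, ENNReal.ofReal c' :=
          (ENNReal.tsum_const_eq_top_of_ne_zero (by simpa using c'0)).symm
      _ ≤ ∑' k, ∫⁻ y in A k, ENNReal.ofReal (v y ^ p * ‖x0 - y‖ ^ (-α)) :=
          ENNReal.tsum_le_tsum low
      _ = ∫⁻ y in ⋃ k, A k, ENNReal.ofReal (v y ^ p * ‖x0 - y‖ ^ (-α)) :=
          (lintegral_iUnion hAm hdis _).symm
      _ ≤ _ := lintegral_mono_set (iUnion_subset fun k => AT_sub)
  exact absurd hfin (not_lt.2 this)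

lemma logl {N α gs P s c k C C' K T0 : ℝ} (hs : 1 < s) (hP : 2 ≤ P)
    (hcr : P * (-gs) < (-gs + 2) / s + N - α + 2) (hc : 0 < c) (hk : 0 < k) (hC : 0 < C)
    (hC' : 0 < C') (hK : 0 < K)
    (H : ∀ T ≥ T0, ∃ V U W S m : ℝ, 0 < V ∧ 0 < U ∧ 0 < W ∧ 0 < S ∧ 0 < m ∧
      c * exp (T * (N + gs)) ≤ V ∧ k * exp (T * (-α)) * W ≤ C * exp (-2 * T) * U ∧
      S ≤ C' * exp (-2 * T) * V ∧ U ^ s ≤ S * m ^ (s - 1) ∧ V ^ P ≤ W * m ^ (P - 2) ∧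
      m ≤ K * exp (T * N)) : False := by
  set δ := s * N + (s * P - 1) * gs - s * α + 2 * s + 2 with hδ
  have δ0 : 0 < δ := by
    have e : (-gs + 2) / s * s = -gs + 2 := div_mul_cancel₀ _ (by linarith)
    have : P * (-gs) * s < ((-gs + 2) / s + N - α + 2) * s :=
      mul_lt_mul_of_pos_right hcr (by linarith)
    have e2 : ((-gs + 2) / s + N - α + 2) * s = (-gs + 2) / s * s + (N - α + 2) * s := by ring
    rw [e2, e] at this
    rw [hδ]; nlinarith
  have key : ∀ T ≥ T0, δ * T ≤ s * (log C - log k) + log C' + (s * P - s - 1) * log K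
      - (s * P - 1) * log c := by
    intro T hT
    obtain ⟨V, U, W, S, m, V0, U0, W0, S0, m0, h1, h2, h3, h4, h5, h6⟩ := H T hT
    have l1 := log_le_log (by positivity) h1
    rw [log_mul hc.ne' (exp_pos _).ne', log_exp] at l1
    have l2 := log_le_log (by positivity) h2
    rw [log_mul (by positivity) W0.ne', log_mul hk.ne' (exp_pos _).ne', log_exp,
      log_mul (by positivity) U0.ne', log_mul hC.ne' (exp_pos _).ne', log_exp] at l2
    have l3 := log_le_log S0 h3
    rw [log_mul (by positivity) V0.ne', log_mul hC'.ne' (exp_pos _).ne', log_exp] at l3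
    have l4 := log_le_log (by positivity) h4
    rw [log_mul S0.ne' (by positivity), log_rpow U0, log_rpow m0] at l4
    have l5 := log_le_log (by positivity) h5
    rw [log_mul W0.ne' (by positivity), log_rpow V0, log_rpow m0] at l5
    have l6 := log_le_log m0 h6
    rw [log_mul hK.ne' (exp_pos _).ne', log_exp] at l6
    generalize log V = a at *
    generalize log U = b at *
    generalize log W = w at *
    generalize log S = z at *
    generalize log m = y at *
    have sP : 2 * s ≤ s * P := by nlinarith
    have m1 := mul_le_mul_of_nonneg_left l5 (by linarith : 0 ≤ s)
    have m2 := mul_le_mul_of_nonneg_left l2 (by linarith : 0 ≤ s)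
    have m3 := mul_le_mul_of_nonneg_left l6 (by linarith : 0 ≤ s * P - s - 1)
    have m4 := mul_le_mul_of_nonneg_left l1 (by linarith : 0 ≤ s * P - 1)
    rw [hδ]
    ring_nf at *
    linarith
  set B := s * (log C - log k) + log C' + (s * P - s - 1) * log K - (s * P - 1) * log c
  have := key (max T0 ((B + 1) / δ)) (le_max_left _ _)
  have h2 : δ * ((B + 1) / δ) ≤ δ * max T0 ((B + 1) / δ) := by gcongr; exact le_max_right _ _
  rw [mul_div_cancel₀ _ δ0.ne'] at h2
  linarith

lemma jens {X : Type*} [MeasurableSpace X] (ν : Measure X) {f : X → ℝ≥0∞} (hf : AEMeasurable f ν)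
    {k : ℝ} (hk : 1 ≤ k) : (∫⁻ x, f x ∂ν) ^ k ≤ (∫⁻ x, f x ^ k ∂ν) * ν univ ^ (k - 1) := by
  rcases hk.eq_or_lt with rfl | hk1
  · simp
  have hc := Real.HolderConjugate.conjExponent hk1
  have := ENNReal.lintegral_mul_le_Lp_mul_Lq ν hc hf (aemeasurable_const (b := (1:ℝ≥0∞)))
  simp only [Pi.mul_apply, mul_one, ENNReal.one_rpow, lintegral_const, one_mul] at this
  have h2 := ENNReal.rpow_le_rpow this (by linarith : 0 ≤ k)
  rw [ENNReal.mul_rpow_of_nonneg _ _ (by linarith), ← ENNReal.rpow_mul, ← ENNReal.rpow_mul] at h2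
  have e1 : 1 / k * k = 1 := by field_simp
  have e2 : 1 / Real.conjExponent k * k = k - 1 := by
    have : k - 1 ≠ 0 := by linarith
    rw [Real.conjExponent]; field_simp
  rwa [e1, e2, ENNReal.rpow_one] at h2

lemma jens2 {X : Type*} [MeasurableSpace X] (ν : Measure X) {f : X → ℝ≥0∞} (hf : AEMeasurable f ν)
    {p q : ℝ} (hp : 0 < p) (hq : 0 < q) (hpq : 2 ≤ p + q) :
    (∫⁻ x, f x ∂ν) ^ (p + q) ≤
      ((∫⁻ x, f x ^ p ∂ν) * (∫⁻ x, f x ^ q ∂ν)) * ν univ ^ (p + q - 2) := by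
  have h1 := jens ν hf (by linarith : 1 ≤ (p + q) / 2)
  have hc : Real.HolderConjugate 2 2 := Real.HolderConjugate.two_two
  have h2 := ENNReal.lintegral_mul_le_Lp_mul_Lq ν hc (hf.pow_const (p / 2)) (hf.pow_const (q / 2))
  have e : ∀ x, ((fun x => f x ^ (p / 2)) * fun x => f x ^ (q / 2)) x = f x ^ ((p + q) / 2) := by
    intro x
    simp only [Pi.mul_apply]
    rw [← ENNReal.rpow_add_of_nonneg _ _ (by linarith) (by linarith)]; congr 1; ring
  simp only [e, ← ENNReal.rpow_mul] at h2
  rw [div_mul_cancel₀ _ (two_ne_zero), div_mul_cancel₀ _ (two_ne_zero)] at h2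
  have h3 := ENNReal.rpow_le_rpow (h1.trans (mul_le_mul_left h2 _)) (by norm_num : (0:ℝ) ≤ 2)
  rw [ENNReal.mul_rpow_of_nonneg _ _ (by norm_num), ENNReal.mul_rpow_of_nonneg _ _ (by norm_num)]
    at h3
  simp only [← ENNReal.rpow_mul] at h3
  convert h3 using 2
  · ring
  · norm_num
  · congr 1; ring

lemma case2 {N : ℕ} (hN : 2 ≤ N) {Ω : Set (Euc N)} {l : ℝ} {φ : Euc N → ℝ}
    (hΩ : IsConeDomain N Ω)
    (h : DirichletEigenpair N Ω l φ) {ρ : ℝ} (hρ : 0 < ρ) {μ : ℝ} (hμ : μ ≤ CHconst N l)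
    {u v : Euc N → ℝ} (hu : Adm N ρ Ω u) (hv : Adm N ρ Ω v)
    {p q s α : ℝ} (hp : 0 < p) (hq : 0 < q) (hα : 0 ≤ α) (hs : 1 < s) (hpq : 2 ≤ p + q)
    (hfin : ∀ x ∈ coneGT N ρ Ω, rieszConv N α ρ Ω (fun y => v y ^ p) x < ⊤)
    (hLu : ∀ x ∈ coneGT N ρ Ω, (rieszConv N α ρ Ω (fun y => v y ^ p) x).toReal * v x ^ q ≤
      -lap N u x - μ * (‖x‖^2)⁻¹ * u x)
    (hLv : ∀ x ∈ coneGT N ρ Ω, u x ^ s ≤ -lap N v x - μ * (‖x‖^2)⁻¹ * v x)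
    (hcr : (p + q) * (-(gammaStar N l μ)) <
        ((-(gammaStar N l μ)) + 2) / s + (N : ℝ) - α + 2) : False := by
  obtain ⟨c, C', T1, hc, hC', E1⟩ := AB hN hΩ h hρ hμ hv
    (fun x hx => (rpow_pos_of_pos (hu.pos x hx) s).le.trans (hLv x hx))
  obtain ⟨c2, C, T2, -, hC, E2⟩ := AB hN hΩ h hρ hμ hu
    (fun x hx => (mul_nonneg ENNReal.toReal_nonneg
      (rpow_pos_of_pos (hv.pos x hx) q).le).trans (hLu x hx))
  obtain ⟨K, hK, vol⟩ := volAT (N := N) (Ω := Ω) hρ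
  set k := (2 * exp 1) ^ (-α) with hk
  have k0 : 0 < k := by positivity
  refine logl (T0 := max T1 T2) hs hpq hcr hc k0 hC hC' hK fun T hT => ?_
  obtain ⟨iv, av, bv⟩ := E1 T ((le_max_left _ _).trans hT)
  obtain ⟨iu, -, bu⟩ := E2 T ((le_max_right _ _).trans hT)
  have hAm : MeasurableSet (AT N ρ Ω T) := AT_meas hρ hΩ T
  have Phm : AEMeasurable (fun x => ENNReal.ofReal (Ph φ x)) (volume.restrict (AT N ρ Ω T)) :=
    (((Ph_contOn hΩ h hρ).mono AT_sub).aemeasurable hAm).ennreal_ofReal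
  have vm : AEMeasurable (fun x => ENNReal.ofReal (v x)) (volume.restrict (AT N ρ Ω T)) :=
    ((hv.cd.continuousOn.mono AT_sub).aemeasurable hAm).ennreal_ofReal
  have um : AEMeasurable (fun x => ENNReal.ofReal (u x)) (volume.restrict (AT N ρ Ω T)) :=
    ((hu.cd.continuousOn.mono AT_sub).aemeasurable hAm).ennreal_ofReal
  have P0 : ∀ x ∈ AT N ρ Ω T, 0 < Ph φ x := fun x hx => Ph_pos h (coneGT_sub hρ hx.1)
  have P1 : ∀ x ∈ AT N ρ Ω T, Ph φ x ≤ 1 := fun x hx => Ph_le h (coneGT_sub hρ hx.1)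
  have v0 : ∀ x ∈ AT N ρ Ω T, 0 < v x := fun x hx => hv.pos x hx.1
  have u0 : ∀ x ∈ AT N ρ Ω T, 0 < u x := fun x hx => hu.pos x hx.1
  set ν := (volume.restrict (AT N ρ Ω T)).withDensity (fun x => ENNReal.ofReal (Ph φ x)) with hν
  have hac : ν ≪ volume.restrict (AT N ρ Ω T) := withDensity_absolutelyContinuous _ _
  have I : ∀ g : Euc N → ℝ≥0∞, AEMeasurable g (volume.restrict (AT N ρ Ω T)) →
      ∫⁻ x, g x ∂ν = ∫⁻ x in AT N ρ Ω T, ENNReal.ofReal (Ph φ x) * g x := fun g hg => by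
    rw [hν, lintegral_withDensity_eq_lintegral_mul₀ Phm hg]; rfl
  set V := ∫⁻ x, ENNReal.ofReal (v x) ∂ν with hV
  set U := ∫⁻ x, ENNReal.ofReal (u x) ∂ν with hU
  set Pp := ∫⁻ x, ENNReal.ofReal (v x) ^ p ∂ν with hPp
  set Qq := ∫⁻ x, ENNReal.ofReal (v x) ^ q ∂ν with hQq
  set S := ∫⁻ x, ENNReal.ofReal (u x) ^ s ∂ν with hS
  set m := ν univ with hm
  have J : ∀ w : Euc N → ℝ, (∀ x ∈ AT N ρ Ω T, 0 < w x) →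
      IntegrableOn (fun x => w x * Ph φ x) (AT N ρ Ω T) →
      AEMeasurable (fun x => ENNReal.ofReal (w x)) (volume.restrict (AT N ρ Ω T)) →
      ∫⁻ x, ENNReal.ofReal (w x) ∂ν = ENNReal.ofReal (∫ x in AT N ρ Ω T, w x * Ph φ x) := by
    intro w w0 iw wm
    rw [I _ wm, ofReal_integral_eq_lintegral_ofReal iw ((ae_restrict_iff' hAm).2
        (Eventually.of_forall fun x hx => (mul_pos (w0 x hx) (P0 x hx)).le))]
    refine setLIntegral_congr_fun hAm fun x hx => ?_
    rw [← ENNReal.ofReal_mul (P0 x hx).le, mul_comm]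
  have JV : V = ENNReal.ofReal (∫ x in AT N ρ Ω T, v x * Ph φ x) := J v v0 iv vm
  have JU : U = ENNReal.ofReal (∫ x in AT N ρ Ω T, u x * Ph φ x) := J u u0 iu um
  have h3 : S ≤ ENNReal.ofReal (C' * exp (-2 * T)) * V := by
    rw [JV, ← ENNReal.ofReal_mul (by positivity)]
    refine le_trans ?_ bv
    rw [hS, I _ (um.pow_const s)]
    refine setLIntegral_mono' hAm fun x hx => ?_
    rw [ENNReal.ofReal_rpow_of_pos (u0 x hx), ← ENNReal.ofReal_mul (P0 x hx).le]
    refine ENNReal.ofReal_le_ofReal ?_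
    rw [mul_comm]
    exact mul_le_mul_of_nonneg_right (hLv x hx.1) (P0 x hx).le
  have h2 : ENNReal.ofReal (k * exp (T * (-α))) * (Pp * Qq) ≤
      ENNReal.ofReal (C * exp (-2 * T)) * U := by
    rw [JU, ← ENNReal.ofReal_mul (by positivity)]
    refine le_trans ?_ bu
    rw [hQq, I _ (vm.pow_const q), ← mul_assoc,
      ← lintegral_const_mul'' (f := fun x => ENNReal.ofReal (Ph φ x) * ENNReal.ofReal (v x) ^ q) _
        (Phm.mul (vm.pow_const q))]
    refine setLIntegral_mono' hAm fun x hx => ?_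
    have cl : ENNReal.ofReal (k * exp (T * (-α))) * Pp ≤
        rieszConv N α ρ Ω (fun y => v y ^ p) x := by
      have q := conv_lower (α := α) (R := 2 * exp (T + 1)) hN hα (f := fun y => v y ^ p) (x := x)
        hAm (fun y hy => (rpow_pos_of_pos (v0 y hy) p).le) (fun y hy => by
          have := (AT_norm hρ hy).2
          have := (AT_norm hρ hx).2
          have := norm_sub_le x y
          linarith) (by positivity)
      have e1 : (2 * exp (T + 1)) ^ (-α) = k * exp (T * (-α)) := by
        rw [hk, exp_mul, ← mul_rpow (by positivity) (by positivity)]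
        congr 1
        rw [exp_add]; ring
      rw [e1] at q
      refine le_trans ?_ (q.trans (lintegral_mono_set AT_sub))
      gcongr
      rw [hPp, I _ (vm.pow_const p)]
      refine setLIntegral_mono' hAm fun y hy => ?_
      rw [ENNReal.ofReal_rpow_of_pos (v0 y hy)]
      exact mul_le_of_le_one_left' (by simpa using P1 y hy)
    calc _ ≤ rieszConv N α ρ Ω (fun y => v y ^ p) x *
          (ENNReal.ofReal (Ph φ x) * ENNReal.ofReal (v x) ^ q) := by gcongr
      _ = ENNReal.ofReal ((rieszConv N α ρ Ω (fun y => v y ^ p) x).toReal *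
          (Ph φ x * v x ^ q)) := by
          rw [ENNReal.ofReal_mul ENNReal.toReal_nonneg, ENNReal.ofReal_toReal (hfin x hx.1).ne,
            ENNReal.ofReal_mul (P0 x hx).le, ENNReal.ofReal_rpow_of_pos (v0 x hx)]
      _ ≤ _ := by
          refine ENNReal.ofReal_le_ofReal ?_
          have := mul_le_mul_of_nonneg_right (hLu x hx.1) (P0 x hx).le
          refine le_trans (le_of_eq ?_) this
          ring
  have h4 : U ^ s ≤ S * m ^ (s - 1) := jens ν (um.mono_ac hac) hs.le
  have h5 : V ^ (p + q) ≤ Pp * Qq * m ^ (p + q - 2) := jens2 ν (vm.mono_ac hac) hp hq hpq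
  have h6 : m ≤ ENNReal.ofReal (K * exp (T * N)) := by
    refine le_trans ?_ (vol T)
    rw [hm, hν, withDensity_apply _ MeasurableSet.univ, Measure.restrict_univ]
    calc _ ≤ ∫⁻ x in AT N ρ Ω T, 1 := by
          refine setLIntegral_mono' hAm fun x hx => by simpa using P1 x hx
      _ = _ := by simp
  have h1 : ENNReal.ofReal (c * exp (T * (N + gammaStar N l μ))) ≤ V := by
    rw [JV]; exact ENNReal.ofReal_le_ofReal av
  obtain ⟨W, hW⟩ : ∃ W, W = Pp * Qq := ⟨_, rfl⟩
  rw [← hW] at h2 h5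
  have Vt : V ≠ ⊤ := by rw [JV]; exact ENNReal.ofReal_ne_top
  have Ut : U ≠ ⊤ := by rw [JU]; exact ENNReal.ofReal_ne_top
  have mt : m ≠ ⊤ := ne_top_of_le_ne_top ENNReal.ofReal_ne_top h6
  have St : S ≠ ⊤ := ne_top_of_le_ne_top (ENNReal.mul_ne_top ENNReal.ofReal_ne_top Vt) h3
  have kk0 : 0 < k * exp (T * (-α)) := by positivity
  have Wt : W ≠ ⊤ := by
    intro hWt
    rw [hWt, ENNReal.mul_top (by simpa using kk0)] at h2
    exact (ENNReal.mul_ne_top ENNReal.ofReal_ne_top Ut) (top_le_iff.1 h2)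
  have V0 : V ≠ 0 := by
    have : 0 < c * exp (T * (N + gammaStar N l μ)) := by positivity
    exact (lt_of_lt_of_le (ENNReal.ofReal_pos.2 this) h1).ne'
  have m0 : m ≠ 0 := by
    intro h0
    have : ν = 0 := Measure.measure_univ_eq_zero.1 h0
    apply V0; rw [hV, this]; simp
  have W0 : W ≠ 0 := by
    intro h0
    rw [h0, zero_mul] at h5
    have := (ENNReal.rpow_eq_zero_iff_of_pos (by linarith)).1 (le_antisymm h5 zero_le)
    exact V0 this
  have U0 : U ≠ 0 := by
    intro h0
    rw [h0, mul_zero] at h2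
    rcases mul_eq_zero.1 (le_antisymm h2 zero_le) with h' | h'
    · exact absurd (ENNReal.ofReal_eq_zero.1 h') (not_le.2 kk0)
    · exact W0 h'
  have S0 : S ≠ 0 := by
    intro h0
    rw [h0, zero_mul] at h4
    exact U0 ((ENNReal.rpow_eq_zero_iff_of_pos (by linarith)).1 (le_antisymm h4 zero_le))
  have r6 := ENNReal.toReal_mono ENNReal.ofReal_ne_top h6
  have r1 := ENNReal.toReal_mono Vt h1
  have r2 := ENNReal.toReal_mono (ENNReal.mul_ne_top ENNReal.ofReal_ne_top Ut) h2
  have r3 := ENNReal.toReal_mono (ENNReal.mul_ne_top ENNReal.ofReal_ne_top Vt) h3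
  have r4 := ENNReal.toReal_mono (ENNReal.mul_ne_top St
    (ENNReal.rpow_ne_top_of_nonneg (by linarith) mt)) h4
  have r5 := ENNReal.toReal_mono (ENNReal.mul_ne_top Wt
    (ENNReal.rpow_ne_top_of_nonneg (by linarith) mt)) h5
  rw [ENNReal.toReal_ofReal (by positivity)] at r6 r1
  rw [ENNReal.toReal_mul, ENNReal.toReal_mul, ENNReal.toReal_ofReal (by positivity),
    ENNReal.toReal_ofReal (by positivity)] at r2
  rw [ENNReal.toReal_mul, ENNReal.toReal_ofReal (by positivity)] at r3
  rw [ENNReal.toReal_mul, ← ENNReal.toReal_rpow, ← ENNReal.toReal_rpow] at r4 r5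
  exact ⟨V.toReal, U.toReal, W.toReal, S.toReal, m.toReal, ENNReal.toReal_pos V0 Vt,
    ENNReal.toReal_pos U0 Ut, ENNReal.toReal_pos W0 Wt, ENNReal.toReal_pos S0 St,
    ENNReal.toReal_pos m0 mt, r1, r2, r3, r4, r5, r6⟩

end helpers

/-- if `μ ≤ C_{H,Ω}`, `s > 1`, `p + q ≥ 2` and either `p·|γ_*| ≤ N - α` or
`(p+q)·|γ_*| < (|γ_*|+2)/s + N - α + 2`, then the system `(S)` has no positive solution. -/
theorem system_no_solution_subcritical
    (N : ℕ) (hN : 2 ≤ N) (Ω : Set (Euc N)) (hΩ : IsConeDomain N Ω)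
    (lam1 : ℝ) (φ : Euc N → ℝ) (hphi : DirichletEigenpair N Ω lam1 φ)
    (α p q s ρ μ : ℝ) (hα : 0 ≤ α) (hαN : α < N) (hp : 0 < p) (hq : 0 < q) (hρ : 0 < ρ)
    (hμ : μ ≤ CHconst N lam1) (hs : 1 < s) (hpq2 : 2 ≤ p + q)
    (hcrit : p * (-(gammaStar N lam1 μ)) ≤ (N : ℝ) - α ∨
      (p + q) * (-(gammaStar N lam1 μ)) <
        ((-(gammaStar N lam1 μ)) + 2) / s + (N : ℝ) - α + 2) :
    ¬ ∃ u v : Euc N → ℝ, IsPosSolS N ρ μ α p q s Ω u v := by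
  rintro ⟨u, v, cu, bu, cv, bv, pu, pv, hfin, hLu, hLv⟩
  have hu := adm_of cu bu pu
  have hv := adm_of cv bv pv
  have hLu2 : ∀ x ∈ coneGT N ρ Ω, (rieszConv N α ρ Ω (fun y => v y ^ p) x).toReal * v x ^ q ≤
      -lap N u x - μ * (‖x‖^2)⁻¹ * u x := fun x hx => by
    have := hLu x hx
    rwa [rp2 (norm_nonneg x)] at this
  have hLv2 : ∀ x ∈ coneGT N ρ Ω, u x ^ s ≤ -lap N v x - μ * (‖x‖^2)⁻¹ * v x := fun x hx => by
    have := hLv x hx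
    rwa [rp2 (norm_nonneg x)] at this
  rcases hcrit with h1 | h2
  · obtain ⟨ω, hω⟩ := hΩ.2.1.nonempty
    have hn : ‖ω‖ = 1 := by simpa using hΩ.1 hω
    have hr : 0 < ρ + 1 := by linarith
    have hn2 : ‖(ρ + 1) • ω‖ = ρ + 1 := by
      rw [norm_smul, hn, mul_one, Real.norm_of_nonneg hr.le]
    have hx : (ρ + 1) • ω ∈ coneGT N ρ Ω := by
      refine ⟨by rw [hn2]; linarith, ?_⟩
      rw [hn2, smul_smul, inv_mul_cancel₀ hr.ne', one_smul]; exact hω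
    exact case1 hN hΩ hphi hρ hμ hv
      (fun x hx => (Real.rpow_pos_of_pos (pu x hx) s).le.trans (hLv2 x hx)) hp hα h1 (hfin _ hx)
  · exact case2 hN hΩ hphi hρ hμ hu hv hp hq hα hs hpq2 hfin hLu2 hLv2 h2
end
end

section
/- Let ρ > 0, μ ∈ ℝ, and let u ∈ C²(C_Ω^ρ) satisfy u > 0 on C_Ω^ρ and −Δu(x) − μ|x|^{−2}u(x) ≥ 0 for all x ∈ C_Ω^ρ. Then for every smooth function ψ : ℝ^N → ℝ with compact support contained in the open cone C_Ω^ρ, one has ∫_{ℝ^N} |∇ψ(x)|² dx ≥ μ ∫_{ℝ^N} ψ(x)²/|x|² dx. -/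
open MeasureTheory Real Set
open scoped ENNReal NNReal

noncomputable section

theorem coneGT_isOpen_aux (N : ℕ) (Ω : Set (Euc N)) (hΩ : IsConeDomain N Ω) (ρ : ℝ) (hρ : 0 < ρ) :
    IsOpen (coneGT N ρ Ω) := by
  obtain ⟨V, hV, hVe⟩ := isOpen_induced_iff.1 hΩ.2.2
  have ho : IsOpen {x : Euc N | ρ < ‖x‖} := isOpen_lt continuous_const continuous_norm
  have hc : ContinuousOn (fun x : Euc N => ‖x‖⁻¹ • x) {x : Euc N | ρ < ‖x‖} := by
    intro x hx
    have hx' : ρ < ‖x‖ := hx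
    have : ‖x‖ ≠ 0 := by linarith
    exact ((continuousAt_id.norm.inv₀ this).smul continuousAt_id).continuousWithinAt
  have h := hc.isOpen_inter_preimage ho hV
  convert h using 1
  ext x
  simp only [coneGT, mem_setOf_eq, mem_inter_iff, mem_preimage]
  refine and_congr_right fun hx => ?_
  have hx0 : ‖x‖ ≠ 0 := by linarith
  have hs : ‖x‖⁻¹ • x ∈ Metric.sphere (0 : Euc N) 1 := by
    simp [norm_smul, hx0]
  have := Set.ext_iff.1 hVe ⟨_, hs⟩
  simpa using this.symm

theorem norm_gradient_sq_aux (N : ℕ) (ψ : Euc N → ℝ) (x : Euc N) :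
    ‖gradient ψ x‖ ^ 2 = ∑ i : Fin N, (fderiv ℝ ψ x (EuclideanSpace.single i 1)) ^ 2 := by
  rw [EuclideanSpace.norm_sq_eq]
  refine Finset.sum_congr rfl fun i _ => ?_
  rw [← inner_gradient_left, EuclideanSpace.inner_single_right]
  simp

theorem fderiv_field_aux (N : ℕ) (u ψ : Euc N → ℝ) (x e : Euc N) (hψ : DifferentiableAt ℝ ψ x)
    (hu : ContDiffAt ℝ 2 u x) (hx : u x ≠ 0) :
    fderiv ℝ (fun y => ψ y ^ 2 * fderiv ℝ u y e * (u y)⁻¹) x e =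
      2 * ψ x * fderiv ℝ ψ x e * fderiv ℝ u x e * (u x)⁻¹
      + ψ x ^ 2 * iteratedFDeriv ℝ 2 u x ![e, e] * (u x)⁻¹
      - ψ x ^ 2 * (fderiv ℝ u x e) ^ 2 * (u x)⁻¹ ^ 2 := by
  have h1 : HasFDerivAt u (fderiv ℝ u x) x := (hu.differentiableAt (by norm_num)).hasFDerivAt
  have h2 : HasFDerivAt (fderiv ℝ u) (fderiv ℝ (fderiv ℝ u) x) x :=
    ((hu.fderiv_right (m := 1) (by norm_num)).differentiableAt (by norm_num)).hasFDerivAt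
  have h3 : HasFDerivAt (fun y => fderiv ℝ u y e)
      ((fderiv ℝ (fderiv ℝ u) x).flip e) x := by
    simpa using h2.clm_apply (hasFDerivAt_const e x)
  have h4 := (hasDerivAt_inv hx).comp_hasFDerivAt x h1
  have h5 := ((hψ.hasFDerivAt.pow 2).mul h3).mul h4
  have h6 : fderiv ℝ (fun y => ψ y ^ 2 * fderiv ℝ u y e * (u y)⁻¹) x = _ := h5.fderiv
  rw [h6, iteratedFDeriv_two_apply]
  simp
  field_simp
  ring

theorem contDiff_field_aux (N : ℕ) (u ψ : Euc N → ℝ) (e : Euc N) (hψ : ContDiff ℝ 1 ψ)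
    (hu : ∀ x ∈ tsupport ψ, ContDiffAt ℝ 2 u x) (hx : ∀ x ∈ tsupport ψ, u x ≠ 0) :
    ContDiff ℝ 1 (fun y => ψ y ^ 2 * fderiv ℝ u y e * (u y)⁻¹) := by
  rw [contDiff_iff_contDiffAt]
  intro x
  by_cases h : x ∈ tsupport ψ
  · have h1 := (hu x h).fderiv_right (m := 1) (by norm_num)
    exact ((hψ.contDiffAt.pow 2).mul (h1.clm_apply contDiffAt_const)).mul
      (((hu x h).of_le (by norm_num)).inv (hx x h))
  · have h0 := notMem_tsupport_iff_eventuallyEq.1 h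
    refine (contDiffAt_const (c := (0 : ℝ))).congr_of_eventuallyEq ?_
    filter_upwards [h0] with y hy
    simp [hy]

theorem integral_fderiv_zero_aux (N : ℕ) (F : Euc N → ℝ) (e : Euc N) (hF : ContDiff ℝ 1 F)
    (hc : HasCompactSupport F) :
    Integrable (fun x => fderiv ℝ F x e) ∧ ∫ x, fderiv ℝ F x e = 0 := by
  have hi : Integrable (fun x => fderiv ℝ F x e) := by
    refine Continuous.integrable_of_hasCompactSupport ?_ (hc.fderiv_apply ℝ e)
    exact (hF.continuous_fderiv (by norm_num)).clm_apply continuous_const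
  refine ⟨hi, ?_⟩
  have := integral_mul_fderiv_eq_neg_fderiv_mul_of_integrable (μ := (volume : Measure (Euc N)))
    (f := F) (g := fun _ => (1 : ℝ)) (v := e) (by simpa using hi) (by simp)
    (by simpa using hF.continuous.integrable_of_hasCompactSupport hc)
    (fun x _ => hF.differentiable (by norm_num) x) (fun x _ => by fun_prop)
  simpa using this

/-- Agmon–Allegretto–Piepenbrink-type positivity estimate: a positive
supersolution of `-Δ - μ|x|⁻²` on `C_Ω^ρ` yields the Hardy-type inequality for every smooth
compactly supported test function in the cone. -/
theorem hardy_inequality_of_positive_supersolution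
    (N : ℕ) (hN : 2 ≤ N) (Ω : Set (Euc N)) (hΩ : IsConeDomain N Ω)
    (ρ μ : ℝ) (hρ : 0 < ρ) (u : Euc N → ℝ)
    (hu2 : ContDiffOn ℝ 2 u (coneGT N ρ Ω))
    (hupos : ∀ x ∈ coneGT N ρ Ω, 0 < u x)
    (hineq : ∀ x ∈ coneGT N ρ Ω, 0 ≤ -lap N u x - μ * ‖x‖ ^ (-(2:ℝ)) * u x) :
    ∀ ψ : Euc N → ℝ, ContDiff ℝ (⊤ : ℕ∞) ψ → HasCompactSupport ψ →
      tsupport ψ ⊆ coneGT N ρ Ω →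
      μ * ∫ x, ψ x ^ 2 / ‖x‖ ^ 2 ≤ ∫ x, ‖gradient ψ x‖ ^ 2 := by
  intro ψ hψ hc hs
  have hO := coneGT_isOpen_aux N Ω hΩ ρ hρ
  have hψ1 : ContDiff ℝ 1 ψ := hψ.of_le (by exact_mod_cast le_top)
  have hua : ∀ x ∈ coneGT N ρ Ω, ContDiffAt ℝ 2 u x := fun x hx =>
    hu2.contDiffAt (hO.mem_nhds hx)
  set F : Fin N → Euc N → ℝ := fun i y =>
    ψ y ^ 2 * fderiv ℝ u y (EuclideanSpace.single i 1) * (u y)⁻¹ with hFdef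
  have hFc : ∀ i, ContDiff ℝ 1 (F i) := fun i =>
    contDiff_field_aux N u ψ _ hψ1 (fun x hx => hua x (hs hx)) (fun x hx => (hupos x (hs hx)).ne')
  have hFs : ∀ i, HasCompactSupport (F i) := fun i => by
    refine hc.mono fun x hx => ?_
    rw [Function.mem_support] at hx ⊢
    intro h0
    exact hx (by simp [hFdef, h0])
  have hI := fun i => integral_fderiv_zero_aux N (F i) (EuclideanSpace.single i 1) (hFc i) (hFs i)
  have hi1 : Integrable (fun x => ψ x ^ 2 / ‖x‖ ^ 2) := by
    refine Continuous.integrable_of_hasCompactSupport ?_ ?_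
    · rw [continuous_iff_continuousAt]
      intro x
      by_cases h : x ∈ tsupport ψ
      · have hx0 : ‖x‖ ≠ 0 := by
          have := (hs h).1
          linarith
        exact (hψ.continuous.continuousAt.pow 2).div (continuousAt_id.norm.pow 2)
          (pow_ne_zero 2 hx0)
      · have h0 := notMem_tsupport_iff_eventuallyEq.1 h
        refine (continuousAt_const (y := (0 : ℝ))).congr ?_
        filter_upwards [h0] with y hy
        simp [hy]
    · refine hc.mono fun x hx => ?_
      rw [Function.mem_support] at hx ⊢
      intro h0
      exact hx (by simp [h0])
  have hi2 : Integrable (fun x => ‖gradient ψ x‖ ^ 2) := by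
    have hn : ∀ x, ‖gradient ψ x‖ = ‖fderiv ℝ ψ x‖ := fun x => by simp [gradient]
    simp_rw [hn]
    refine Continuous.integrable_of_hasCompactSupport
      ((hψ1.continuous_fderiv (by norm_num)).norm.pow 2) ?_
    refine (hc.fderiv ℝ).mono fun x hx => ?_
    rw [Function.mem_support] at hx ⊢
    intro h0
    exact hx (by simp [h0])
  have hkey : ∀ x, ∑ i, fderiv ℝ (F i) x (EuclideanSpace.single i 1) ≤
      ‖gradient ψ x‖ ^ 2 - μ * (ψ x ^ 2 / ‖x‖ ^ 2) := by
    intro x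
    by_cases h : x ∈ tsupport ψ
    · have hx := hs h
      have hup := hupos x hx
      have hle := hineq x hx
      rw [Real.rpow_neg (norm_nonneg x), Real.rpow_two] at hle
      have hw : ψ x ^ 2 * lap N u x * (u x)⁻¹ ≤ - (μ * (ψ x ^ 2 / ‖x‖ ^ 2)) := by
        have h7 : 0 ≤ ψ x ^ 2 * (u x)⁻¹ * (-lap N u x - μ * (‖x‖ ^ 2)⁻¹ * u x) := by positivity
        have h8 : ψ x ^ 2 * (u x)⁻¹ * (-lap N u x - μ * (‖x‖ ^ 2)⁻¹ * u x)
            = - (ψ x ^ 2 * lap N u x * (u x)⁻¹) - μ * (ψ x ^ 2 / ‖x‖ ^ 2) * (u x * (u x)⁻¹) := by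
          ring
        rw [mul_inv_cancel₀ hup.ne'] at h8
        linarith
      rw [norm_gradient_sq_aux]
      have hsum : ∑ i, fderiv ℝ (F i) x (EuclideanSpace.single i 1) ≤
          ∑ i, ((fderiv ℝ ψ x (EuclideanSpace.single i 1)) ^ 2 + ψ x ^ 2 *
            iteratedFDeriv ℝ 2 u x ![EuclideanSpace.single i 1, EuclideanSpace.single i 1]
              * (u x)⁻¹) := by
        refine Finset.sum_le_sum fun i _ => ?_
        rw [hFdef, fderiv_field_aux N u ψ x _ (hψ1.differentiable (by norm_num) x) (hua x hx)
          hup.ne']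
        nlinarith [sq_nonneg (fderiv ℝ ψ x (EuclideanSpace.single i 1) -
          ψ x * fderiv ℝ u x (EuclideanSpace.single i 1) * (u x)⁻¹)]
      rw [Finset.sum_add_distrib, ← Finset.sum_mul, ← Finset.mul_sum] at hsum
      have : ψ x ^ 2 * lap N u x * (u x)⁻¹ = ψ x ^ 2 * (∑ i : Fin N,
          iteratedFDeriv ℝ 2 u x ![EuclideanSpace.single i 1, EuclideanSpace.single i 1])
            * (u x)⁻¹ := rfl
      linarith
    · have h0 := notMem_tsupport_iff_eventuallyEq.1 h
      have hF0 : ∀ i, fderiv ℝ (F i) x = 0 := fun i => by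
        have : F i =ᶠ[nhds x] fun _ => (0 : ℝ) := by
          filter_upwards [h0] with y hy
          simp [hFdef, hy]
        rw [this.fderiv_eq]
        simp
      have hx0 : ψ x = 0 := h0.self_of_nhds
      simp only [hF0, hx0]
      simp
  have hint := integral_mono (integrable_finsetSum Finset.univ fun i _ => (hI i).1)
    (hi2.sub (hi1.const_mul μ)) hkey
  rw [integral_finsetSum _ fun i _ => (hI i).1] at hint
  simp only [fun i => (hI i).2, Finset.sum_const_zero, Pi.sub_apply] at hint
  rw [integral_sub hi2 (hi1.const_mul μ), integral_const_mul] at hint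
  linarith
end
end
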